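/- arXiv:2405.14760 — 3 statements merged into one kernel-verified Lean document; each statement's English description precedes it below -/
import Mathlib

section
/- Fix κ ∈ {1, −1}. Let V ⊆ ℝ² be open, with V ⊆ 𝔻 in case κ = −1, and let φ : V → ℝ be a smooth function such that κ·φ(x,y) < 0 for all (x,y) ∈ V and Δφ + 8κφ/(1 + κ(x² + y²))² = 0 on V. Fix real constants m and 𝐤. On U ≔ V × ℝ × ℝ with coordinates (x, y, v, r), define the 1-forms θ ≔ dv − φ_y dx + φ_x dy and ω ≔ dv + dr + (1/2)(−1 + 𝐤·m·r/(r² + φ²))·θ, and the symmetric 2-tensor g ≔ −(κ/2)(r² + φ²)·(4/(1 + κ(x² + y²))²)·(dx ⊗ dx + dy ⊗ dy) + θ ∨ ω. Then at every point of U the matrix (g_{AB}) is invertible, and the Ricci tensor of the coordinate metric g vanishes identically on U (i.e. each metric of the Kerr family (6.1)/(1.7) of the paper, written in the coordinates (x,y,v,r), is Ricci flat). -/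
/-- Partial derivative in `x` of a function of two real variables. -/
noncomputable def pdx (f : ℝ × ℝ → ℝ) (p : ℝ × ℝ) : ℝ := fderiv ℝ f p (1, 0)

/-- Partial derivative in `y` of a function of two real variables. -/
noncomputable def pdy (f : ℝ × ℝ → ℝ) (p : ℝ × ℝ) : ℝ := fderiv ℝ f p (0, 1)

/-- Laplacian of a function of two real variables. -/
noncomputable def lap (f : ℝ × ℝ → ℝ) (p : ℝ × ℝ) : ℝ := pdx (pdx f) p + pdy (pdy f) p

/-- Partial derivative `∂_A` of a function on `ℝ⁴`. -/
noncomputable def pd (A : Fin 4) (f : (Fin 4 → ℝ) → ℝ) (p : Fin 4 → ℝ) : ℝ :=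
  fderiv ℝ f p (Pi.single A 1)

/-- Christoffel symbols `Γ^C_{AB}` of a coordinate metric on (an open subset of) `ℝ⁴`. -/
noncomputable def Christoffel (g : (Fin 4 → ℝ) → Matrix (Fin 4) (Fin 4) ℝ)
    (C A B : Fin 4) (p : Fin 4 → ℝ) : ℝ :=
  (1 / 2) * ∑ D : Fin 4, (g p)⁻¹ C D *
    (pd A (fun q => g q B D) p + pd B (fun q => g q A D) p - pd D (fun q => g q A B) p)

/-- Riemann curvature tensor `R^D_{CAB}` of a coordinate metric. -/
noncomputable def RiemannT (g : (Fin 4 → ℝ) → Matrix (Fin 4) (Fin 4) ℝ)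
    (D C A B : Fin 4) (p : Fin 4 → ℝ) : ℝ :=
  pd A (Christoffel g D B C) p - pd B (Christoffel g D A C) p +
    ∑ E : Fin 4, (Christoffel g D A E p * Christoffel g E B C p -
      Christoffel g D B E p * Christoffel g E A C p)

/-- Ricci tensor `Ric_{AB}` of a coordinate metric. -/
noncomputable def RicciT (g : (Fin 4 → ℝ) → Matrix (Fin 4) (Fin 4) ℝ)
    (A B : Fin 4) (p : Fin 4 → ℝ) : ℝ :=
  (∑ C : Fin 4, (pd C (Christoffel g C A B) p - pd A (Christoffel g C C B) p)) +
    ∑ C : Fin 4, ∑ D : Fin 4, (Christoffel g C C D p * Christoffel g D A B p -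
      Christoffel g C A D p * Christoffel g D C B p)

/-!
The metric is written in a moving frame `e₀, e₁, e₂ = ∂_v, e₃ = ∂_r` dual to
`dx, dy, θ, dv + dr - θ`. With `ζ = φ + i r` one has `(e₀ + i e₁) ζ = 0`, so that all frame
derivatives of `1 / ζ = τ - i σ` are determined by the single complex quantity
`(e₀ - i e₁) (1 / ζ)`, encoded by the real functions `b₀, b₁`. Together with the coefficient `G`
of `dx² + dy²` and its logarithmic derivatives `2 a₀, 2 a₁`, these functions satisfy structure
equations that are polynomial; the equation for `φ` enters only through
`[e₀, e₁] = 4 G τ (e₃ - e₂)` and through the curl and divergence of `a` and the divergence of `b`.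
The Levi-Civita connection in the frame is polynomial in `G, σ, τ, a, b` as well, and the Ricci
tensor in the frame vanishes by the structure equations. Uniqueness of the Levi-Civita connection
identifies the frame connection with the Christoffel symbols up to the gauge transformation by the
frame, under which the curvature is conjugated.
-/

open Matrix Filter Topology

theorem fderiv_fderiv_apply_comm {E : Type*} [NormedAddCommGroup E] [NormedSpace ℝ E]
    {f : E → ℝ} {p : E} (hf : ContDiffAt ℝ 2 f p) (v w : E) :
    fderiv ℝ (fun q => fderiv ℝ f q v) p w = fderiv ℝ (fun q => fderiv ℝ f q w) p v := by
  have hd : DifferentiableAt ℝ (fderiv ℝ f) p :=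
    (hf.fderiv_right (m := 1) (by norm_num)).differentiableAt one_ne_zero
  have hsymm : IsSymmSndFDerivAt ℝ f p := hf.isSymmSndFDerivAt (by simp)
  simpa [fderiv_clm_apply hd (differentiableAt_const _)] using hsymm w v

theorem contDiffAt_fderiv_apply {E : Type*} [NormedAddCommGroup E] [NormedSpace ℝ E]
    {f : E → ℝ} {p : E} {m n : WithTop ℕ∞} (hf : ContDiffAt ℝ n f p) (hmn : m + 1 ≤ n) (v : E) :
    ContDiffAt ℝ m (fun q => fderiv ℝ f q v) p :=
  (hf.fderiv_right hmn).clm_apply contDiffAt_const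

/-! ### Matrix-valued functions -/

/-- A field of `4 × 4` matrices on coordinate space: a metric, a frame, or the component of a
matrix-valued form. -/
abbrev MatrixField := (Fin 4 → ℝ) → Matrix (Fin 4) (Fin 4) ℝ

/-- Entrywise differentiability, `Matrix` having no canonical norm. -/
def EntrywiseDifferentiableAt (M : MatrixField) (p : Fin 4 → ℝ) : Prop :=
  ∀ i j, DifferentiableAt ℝ (fun q => M q i j) p

/-- The entrywise partial derivative `∂_A M` of a matrix field. -/
noncomputable def matrixPd (A : Fin 4) (M : MatrixField) : MatrixField :=
  fun p => .of fun i j => pd A (fun q => M q i j) p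

section MatrixFields

variable {M N : MatrixField} {p : Fin 4 → ℝ}

theorem EntrywiseDifferentiableAt.mul (hM : EntrywiseDifferentiableAt M p)
    (hN : EntrywiseDifferentiableAt N p) : EntrywiseDifferentiableAt (fun q => M q * N q) p :=
  fun i j => by
    simp only [mul_apply]
    exact .fun_sum fun k _ => (hM i k).mul (hN k j)

theorem EntrywiseDifferentiableAt.sub (hM : EntrywiseDifferentiableAt M p)
    (hN : EntrywiseDifferentiableAt N p) : EntrywiseDifferentiableAt (fun q => M q - N q) p :=
  fun i j => (hM i j).sub (hN i j)

theorem EntrywiseDifferentiableAt.transpose (hM : EntrywiseDifferentiableAt M p) :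
    EntrywiseDifferentiableAt (fun q => (M q)ᵀ) p :=
  fun i j => hM j i

theorem EntrywiseDifferentiableAt.congr_of_eventuallyEq (hM : EntrywiseDifferentiableAt M p)
    (hNM : N =ᶠ[𝓝 p] M) : EntrywiseDifferentiableAt N p :=
  fun i j => (hM i j).congr_of_eventuallyEq (hNM.fun_comp fun M => M i j)

theorem matrixPd_mul (A : Fin 4) (hM : EntrywiseDifferentiableAt M p)
    (hN : EntrywiseDifferentiableAt N p) :
    matrixPd A (fun q => M q * N q) p = matrixPd A M p * N p + M p * matrixPd A N p := by
  ext i j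
  have hMN : ∀ k ∈ Finset.univ, DifferentiableAt ℝ (fun q => M q i k * N q k j) p :=
    fun k _ => (hM i k).mul (hN k j)
  simp only [matrixPd, pd, mul_apply, of_apply, Matrix.add_apply, fderiv_fun_sum hMN,
    fderiv_fun_mul (hM _ _) (hN _ _), _root_.sum_apply, _root_.add_apply,
    _root_.smul_apply, smul_eq_mul, ← Finset.sum_add_distrib]
  exact Finset.sum_congr rfl fun k _ => by ring

theorem matrixPd_sub (A : Fin 4) (hM : EntrywiseDifferentiableAt M p)
    (hN : EntrywiseDifferentiableAt N p) :
    matrixPd A (fun q => M q - N q) p = matrixPd A M p - matrixPd A N p := by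
  ext i j
  simp only [matrixPd, pd, Matrix.sub_apply, of_apply, fderiv_fun_sub (hM i j) (hN i j),
    _root_.sub_apply]

theorem matrixPd_transpose (A : Fin 4) (M : MatrixField) (p : Fin 4 → ℝ) :
    matrixPd A (fun q => (M q)ᵀ) p = (matrixPd A M p)ᵀ :=
  rfl

theorem matrixPd_congr (A : Fin 4) (hMN : M =ᶠ[𝓝 p] N) : matrixPd A M p = matrixPd A N p := by
  ext i j
  have hij : (fun q => M q i j) =ᶠ[𝓝 p] fun q => N q i j := hMN.fun_comp fun M => M i j
  simp only [matrixPd, pd, of_apply, hij.fderiv_eq]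

theorem entrywiseDifferentiableAt_matrixPd (A : Fin 4)
    (hM : ∀ i j, ContDiffAt ℝ 2 (fun q => M q i j) p) :
    EntrywiseDifferentiableAt (matrixPd A M) p :=
  fun i j =>
    (contDiffAt_fderiv_apply (m := 1) (hM i j) (by norm_num) _).differentiableAt one_ne_zero

theorem matrixPd_comm (A B : Fin 4) (hM : ∀ i j, ContDiffAt ℝ 2 (fun q => M q i j) p) :
    matrixPd A (matrixPd B M) p = matrixPd B (matrixPd A M) p := by
  ext i j
  exact fderiv_fderiv_apply_comm (hM i j) _ _

end MatrixFields

/-! ### Connection and curvature forms -/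

/-- The Levi-Civita connection form in the coordinate frame: `(Γ_A)^C_B = Γ^C_{AB}`. -/
noncomputable def christoffelForm (g : MatrixField) (A : Fin 4) : MatrixField :=
  fun p => .of fun C B => Christoffel g C A B p

/-- The curvature `∂_A Ω_B - ∂_B Ω_A + [Ω_A, Ω_B]` of the matrix-valued connection form
`Ω = ∑ A, Ω_A dx^A`. -/
noncomputable def curvatureForm (Ω : Fin 4 → MatrixField) (A B : Fin 4) : MatrixField :=
  fun p => matrixPd A (Ω B) p - matrixPd B (Ω A) p + (Ω A p * Ω B p - Ω B p * Ω A p)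

theorem riemannT_eq_curvatureForm (g : MatrixField) (D C A B : Fin 4) (p : Fin 4 → ℝ) :
    RiemannT g D C A B p = curvatureForm (christoffelForm g) A B p D C := by
  simp only [RiemannT, curvatureForm, christoffelForm, matrixPd, Matrix.add_apply,
    Matrix.sub_apply, mul_apply, of_apply, Finset.sum_sub_distrib]

theorem ricciT_eq_sum_riemannT (g : MatrixField) (A B : Fin 4) (p : Fin 4 → ℝ) :
    RicciT g A B p = ∑ C, RiemannT g C B C A p := by
  simp only [RicciT, RiemannT, Finset.sum_add_distrib]

theorem christoffelForm_eq_of_metric_torsionFree {g : MatrixField} {p : Fin 4 → ℝ}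
    {Γ : Fin 4 → Matrix (Fin 4) (Fin 4) ℝ} (hg : IsUnit (g p)) (hsymm : (g p).IsSymm)
    (htorsion : ∀ A B C, Γ A C B = Γ B C A)
    (hmetric : ∀ A, matrixPd A g p = (Γ A)ᵀ * g p + g p * Γ A) (A : Fin 4) :
    christoffelForm g A p = Γ A := by
  have hpd (A B D : Fin 4) :
      pd A (fun q => g q B D) p = (g p * Γ A) D B + (g p * Γ A) B D := by
    have h := congrFun₂ (hmetric A) B D
    rwa [Matrix.add_apply, ← transpose_apply ((Γ A)ᵀ * g p), transpose_mul, transpose_transpose,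
      hsymm.eq] at h
  have hlower (A B D : Fin 4) : (g p * Γ A) D B = (g p * Γ B) D A := by
    simp only [mul_apply, htorsion A B]
  have hkoszul (B D : Fin 4) : pd A (fun q => g q B D) p + pd B (fun q => g q A D) p -
      pd D (fun q => g q A B) p = 2 * (g p * Γ A) D B := by
    rw [hpd A, hpd B, hpd D, hlower D A B, hlower D B A, hlower B A D]
    ring
  ext C B
  calc christoffelForm g A p C B = ((g p)⁻¹ * (g p * Γ A)) C B := by
        simp only [christoffelForm, Christoffel, of_apply, hkoszul, mul_apply (M := (g p)⁻¹),
          Finset.mul_sum]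
        exact Finset.sum_congr rfl fun D _ => by ring
    _ = Γ A C B := by rw [nonsing_inv_mul_cancel_left _ _ ((isUnit_iff_isUnit_det _).1 hg)]

/- `Γ_A E = E Ω_A - ∂_A E` says that `Ω` expresses the connection `Γ` in the frame of the columns
of `E`. -/
theorem curvatureForm_mul_frame {U : Set (Fin 4 → ℝ)} (hU : IsOpen U) {E : MatrixField}
    {Γ Ω : Fin 4 → MatrixField} {p : Fin 4 → ℝ} (hp : p ∈ U)
    (hE : ∀ i j, ContDiffAt ℝ 2 (fun q => E q i j) p)
    (hΓ : ∀ A, EntrywiseDifferentiableAt (Γ A) p) (hΩ : ∀ A, EntrywiseDifferentiableAt (Ω A) p)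
    (hgauge : ∀ q ∈ U, ∀ A, Γ A q * E q = E q * Ω A q - matrixPd A E q) (A B : Fin 4) :
    curvatureForm Γ A B p * E p = E p * curvatureForm Ω A B p := by
  have hE' : EntrywiseDifferentiableAt E p := fun i j => (hE i j).differentiableAt two_ne_zero
  have hderiv (A B : Fin 4) : matrixPd A (Γ B) p * E p = matrixPd A E p * Ω B p +
      E p * matrixPd A (Ω B) p - matrixPd A (matrixPd B E) p - Γ B p * matrixPd A E p := by
    rw [eq_sub_iff_add_eq, ← matrixPd_mul A (hΓ B) hE', ← matrixPd_mul A hE' (hΩ B),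
      ← matrixPd_sub A (hE'.mul (hΩ B)) (entrywiseDifferentiableAt_matrixPd B hE)]
    exact matrixPd_congr A (eventually_of_mem (hU.mem_nhds hp) fun q hq => hgauge q hq B)
  have hprod (A B : Fin 4) : Γ A p * Γ B p * E p =
      E p * (Ω A p * Ω B p) - matrixPd A E p * Ω B p - Γ A p * matrixPd B E p := by
    rw [Matrix.mul_assoc, hgauge p hp B, Matrix.mul_sub, ← Matrix.mul_assoc, hgauge p hp A,
      Matrix.sub_mul, Matrix.mul_assoc]
  simp only [curvatureForm, Matrix.add_mul, Matrix.sub_mul, hderiv, hprod, matrixPd_comm B A hE,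
    Matrix.mul_add, Matrix.mul_sub]
  abel

/-! ### Moving frames -/

/-- The derivatives `e_a f` of a function along the frame whose vectors `e_a` are the columns
of `E`. -/
noncomputable def frameDeriv (E : MatrixField) (f : (Fin 4 → ℝ) → ℝ) (p : Fin 4 → ℝ) : Fin 4 → ℝ :=
  fun a => fderiv ℝ f p ((E p).col a)

section FrameDeriv

variable {E θ : MatrixField} {f h : (Fin 4 → ℝ) → ℝ} {p : Fin 4 → ℝ}

theorem frameDeriv_eq_sum_pd (E : MatrixField) (f : (Fin 4 → ℝ) → ℝ) (p : Fin 4 → ℝ) (a : Fin 4) :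
    frameDeriv E f p a = ∑ A, E p A a * pd A f p := by
  rw [frameDeriv, pi_eq_sum_univ' ((E p).col a), map_sum]
  simp only [map_smul, smul_eq_mul, pd, col_apply]

theorem pd_eq_sum_frameDeriv (hEθ : E p * θ p = 1) (A : Fin 4) :
    pd A f p = ∑ a, θ p a A * frameDeriv E f p a := by
  calc pd A f p = ∑ B, (E p * θ p) B A * pd B f p := by simp [hEθ, one_apply]
    _ = ∑ a, θ p a A * frameDeriv E f p a := by
        simp only [mul_apply, frameDeriv_eq_sum_pd, Finset.sum_mul, Finset.mul_sum]
        rw [Finset.sum_comm]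
        exact Finset.sum_congr rfl fun a _ => Finset.sum_congr rfl fun B _ => by ring

theorem frameDeriv_const (E : MatrixField) (t : ℝ) (p : Fin 4 → ℝ) :
    frameDeriv E (fun _ => t) p = 0 := by
  ext a
  simp [frameDeriv]

theorem frameDeriv_add (hf : DifferentiableAt ℝ f p) (hh : DifferentiableAt ℝ h p) :
    frameDeriv E (fun q => f q + h q) p = frameDeriv E f p + frameDeriv E h p := by
  ext a
  simp [frameDeriv, fderiv_fun_add hf hh]

theorem frameDeriv_sub (hf : DifferentiableAt ℝ f p) (hh : DifferentiableAt ℝ h p) :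
    frameDeriv E (fun q => f q - h q) p = frameDeriv E f p - frameDeriv E h p := by
  ext a
  simp [frameDeriv, fderiv_fun_sub hf hh]

theorem frameDeriv_neg : frameDeriv E (fun q => -f q) p = -frameDeriv E f p := by
  ext a
  simp [frameDeriv, fderiv_fun_neg]

theorem frameDeriv_mul (hf : DifferentiableAt ℝ f p) (hh : DifferentiableAt ℝ h p) :
    frameDeriv E (fun q => f q * h q) p = f p • frameDeriv E h p + h p • frameDeriv E f p := by
  ext a
  simp [frameDeriv, fderiv_fun_mul hf hh]

theorem frameDeriv_pow (n : ℕ) (hf : DifferentiableAt ℝ f p) :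
    frameDeriv E (fun q => f q ^ n) p = (n * f p ^ (n - 1)) • frameDeriv E f p := by
  ext a
  simp [frameDeriv, fderiv_fun_pow n hf]

theorem differentiableAt_div (hf : DifferentiableAt ℝ f p) (hh : DifferentiableAt ℝ h p)
    (hne : h p ≠ 0) : DifferentiableAt ℝ (fun q => f q / h q) p := by
  simpa only [div_eq_mul_inv] using hf.fun_mul (hh.fun_inv hne)

theorem frameDeriv_inv (hf : DifferentiableAt ℝ f p) (hne : f p ≠ 0) :
    frameDeriv E (fun q => (f q)⁻¹) p = (-(f p ^ 2)⁻¹) • frameDeriv E f p := by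
  ext a
  have h : fderiv ℝ (fun q => (f q)⁻¹) p = (-(f p ^ 2)⁻¹) • fderiv ℝ f p :=
    ((hasDerivAt_inv hne).comp_hasFDerivAt p hf.hasFDerivAt).fderiv
  simp only [frameDeriv, h, _root_.smul_apply, Pi.smul_apply]

theorem frameDeriv_div (hf : DifferentiableAt ℝ f p) (hh : DifferentiableAt ℝ h p)
    (hne : h p ≠ 0) : frameDeriv E (fun q => f q / h q) p =
      (h p ^ 2)⁻¹ • (h p • frameDeriv E f p - f p • frameDeriv E h p) := by
  simp only [div_eq_mul_inv]
  rw [frameDeriv_mul hf (hh.fun_inv hne), frameDeriv_inv hh hne]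
  ext a
  simp only [Pi.add_apply, Pi.sub_apply, Pi.smul_apply, smul_eq_mul]
  field_simp
  ring

theorem frameDeriv_sum {ι : Type*} (s : Finset ι) {F : ι → (Fin 4 → ℝ) → ℝ}
    (hF : ∀ i ∈ s, DifferentiableAt ℝ (F i) p) :
    frameDeriv E (fun q => ∑ i ∈ s, F i q) p = ∑ i ∈ s, frameDeriv E (F i) p := by
  ext a
  simp [frameDeriv, fderiv_fun_sum hF, _root_.sum_apply]

theorem frameDeriv_congr (hfh : f =ᶠ[𝓝 p] h) : frameDeriv E f p = frameDeriv E h p := by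
  ext a
  simp only [frameDeriv, hfh.fderiv_eq]

end FrameDeriv

/-- The connection form `Ω_A = ∑ a, θ^a_A γ_a` whose value on the frame vector `e_a` is `γ_a`,
where the rows of `θ` are the dual coframe. -/
noncomputable def coordinateForm (θ : MatrixField) (γ : Fin 4 → MatrixField) (A : Fin 4) :
    MatrixField :=
  fun p => ∑ a, θ p a A • γ a p

/-- The columns `e_a` of `E` are a frame on the open set `U` with dual coframe the rows of `θ` and
Gram matrix `η` with respect to the metric `g`, and `∇_{e_a} e_b = ∑ c, (γ_a)^c_b e_c` is a
metric and torsion-free connection. -/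
structure IsLeviCivitaFrame (U : Set (Fin 4 → ℝ)) (g E θ η : MatrixField)
    (γ : Fin 4 → MatrixField) : Prop where
  isOpen : IsOpen U
  contDiffAt_frame : ∀ p ∈ U, ∀ i j, ContDiffAt ℝ 2 (fun q => E q i j) p
  differentiableAt_coframe : ∀ p ∈ U, EntrywiseDifferentiableAt θ p
  differentiableAt_gram : ∀ p ∈ U, EntrywiseDifferentiableAt η p
  differentiableAt_connection : ∀ p ∈ U, ∀ a, EntrywiseDifferentiableAt (γ a) p
  coframe_mul_frame : ∀ p ∈ U, θ p * E p = 1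
  metric_eq : ∀ p ∈ U, g p = (θ p)ᵀ * η p * θ p
  isSymm_gram : ∀ p ∈ U, (η p).IsSymm
  isUnit_gram : ∀ p ∈ U, IsUnit (η p)
  metric_compatible : ∀ p ∈ U, ∀ a b c,
    frameDeriv E (fun q => η q b c) p a = ((γ a p)ᵀ * η p + η p * γ a p) b c
  torsion_free : ∀ p ∈ U, ∀ a b A,
    frameDeriv E (fun q => E q A b) p a - frameDeriv E (fun q => E q A a) p b =
      (E p * γ a p) A b - (E p * γ b p) A a

/-- The Ricci tensor in a frame, in terms of the connection coefficients `(γ_a)^c_b`. -/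
noncomputable def frameRicci (E : MatrixField) (γ : Fin 4 → MatrixField) (p : Fin 4 → ℝ)
    (a b : Fin 4) : ℝ :=
  ∑ c, (frameDeriv E (fun q => γ a q c b) p c - frameDeriv E (fun q => γ c q c b) p a) +
    ∑ c, ∑ d, (γ c p c d * γ a p d b - γ d p c b * γ c p d a)

namespace IsLeviCivitaFrame

variable {U : Set (Fin 4 → ℝ)} {g E θ η : MatrixField} {γ : Fin 4 → MatrixField} {p : Fin 4 → ℝ}

theorem frame_mul_coframe (h : IsLeviCivitaFrame U g E θ η γ) (hp : p ∈ U) : E p * θ p = 1 :=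
  mul_eq_one_comm.1 (h.coframe_mul_frame p hp)

theorem isUnit_metric (h : IsLeviCivitaFrame U g E θ η γ) (hp : p ∈ U) : IsUnit (g p) := by
  have hθ : IsUnit (θ p) := .of_mul_eq_one _ (h.coframe_mul_frame p hp)
  rw [h.metric_eq p hp]
  exact ((isUnit_transpose _).2 hθ |>.mul (h.isUnit_gram p hp)).mul hθ

theorem isSymm_metric (h : IsLeviCivitaFrame U g E θ η γ) (hp : p ∈ U) : (g p).IsSymm := by
  rw [h.metric_eq p hp, IsSymm, transpose_mul, transpose_mul, transpose_transpose,
    (h.isSymm_gram p hp).eq, Matrix.mul_assoc]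

theorem gram_eq (h : IsLeviCivitaFrame U g E θ η γ) (hp : p ∈ U) :
    η p = (E p)ᵀ * (g p * E p) := by
  have hθE : (E p)ᵀ * (θ p)ᵀ = 1 := by
    rw [← transpose_mul, h.coframe_mul_frame p hp, transpose_one]
  rw [h.metric_eq p hp, Matrix.mul_assoc, h.coframe_mul_frame p hp, Matrix.mul_one,
    ← Matrix.mul_assoc, hθE, Matrix.one_mul]

theorem differentiableAt_metric (h : IsLeviCivitaFrame U g E θ η γ) (hp : p ∈ U) :
    EntrywiseDifferentiableAt g p :=
  have hθ := h.differentiableAt_coframe p hp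
  ((hθ.transpose.mul (h.differentiableAt_gram p hp)).mul hθ).congr_of_eventuallyEq
    (eventually_of_mem (h.isOpen.mem_nhds hp) h.metric_eq)

theorem differentiableAt_coordinateForm (h : IsLeviCivitaFrame U g E θ η γ) (hp : p ∈ U)
    (A : Fin 4) : EntrywiseDifferentiableAt (coordinateForm θ γ A) p := fun i j => by
  simp only [coordinateForm, Matrix.sum_apply, Matrix.smul_apply, smul_eq_mul]
  exact .fun_sum fun a _ =>
    (h.differentiableAt_coframe p hp a A).mul (h.differentiableAt_connection p hp a i j)

theorem sum_frame_smul_coordinateForm (h : IsLeviCivitaFrame U g E θ η γ) (hp : p ∈ U)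
    (a : Fin 4) : ∑ A, E p A a • coordinateForm θ γ A p = γ a p := by
  calc ∑ A, E p A a • coordinateForm θ γ A p = ∑ b, (θ p * E p) b a • γ b p := by
        simp only [coordinateForm, Finset.smul_sum, mul_apply, Finset.sum_smul, smul_smul]
        rw [Finset.sum_comm]
        simp only [mul_comm]
    _ = γ a p := by simp [h.coframe_mul_frame p hp, one_apply]

/- The matrix `Γ_A = (E Ω_A - ∂_A E) θ` is the connection `Ω` expressed in coordinates. It is
symmetric because its components along the frame are. -/
theorem coordinate_torsion_free (h : IsLeviCivitaFrame U g E θ η γ) (hp : p ∈ U)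
    (A B C : Fin 4) :
    ((E p * coordinateForm θ γ A p - matrixPd A E p) * θ p) C B =
      ((E p * coordinateForm θ γ B p - matrixPd B E p) * θ p) C A := by
  set Δ : Fin 4 → Matrix (Fin 4) (Fin 4) ℝ :=
    fun A => E p * coordinateForm θ γ A p - matrixPd A E p with hΔ
  have hframe (a b : Fin 4) : ∑ A, E p A a * Δ A C b =
      (E p * γ a p) C b - frameDeriv E (fun q => E q C b) p a := by
    have hmul : ∑ A, E p A a • (E p * coordinateForm θ γ A p) = E p * γ a p := by
      rw [← h.sum_frame_smul_coordinateForm hp a, Matrix.mul_sum]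
      simp only [Matrix.mul_smul]
    rw [← hmul, frameDeriv_eq_sum_pd]
    simp only [hΔ, Matrix.sub_apply, mul_sub, Finset.sum_sub_distrib, Matrix.sum_apply,
      Matrix.smul_apply, smul_eq_mul, matrixPd, of_apply]
  set N : Matrix (Fin 4) (Fin 4) ℝ := .of fun A b => Δ A C b with hN
  have hsymm : ((E p)ᵀ * N).IsSymm := by
    ext a b
    have hab := h.torsion_free p hp a b C
    simp only [transpose_apply, mul_apply, hN, of_apply, hframe] at hab ⊢
    linarith
  have hNθ : (N * θ p).IsSymm := by
    have : N * θ p = (θ p)ᵀ * ((E p)ᵀ * N) * θ p := by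
      rw [← Matrix.mul_assoc (θ p)ᵀ (E p)ᵀ N, ← transpose_mul, h.frame_mul_coframe hp,
        transpose_one, Matrix.one_mul]
    rw [this, IsSymm, transpose_mul, transpose_mul, hsymm.eq, transpose_transpose,
      ← Matrix.mul_assoc]
  simpa only [hN, mul_apply, of_apply] using hNθ.apply B A

theorem matrixPd_gram (h : IsLeviCivitaFrame U g E θ η γ) (hp : p ∈ U) (A : Fin 4) :
    matrixPd A η p = (coordinateForm θ γ A p)ᵀ * η p + η p * coordinateForm θ γ A p := by
  have hsum : (coordinateForm θ γ A p)ᵀ * η p + η p * coordinateForm θ γ A p =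
      ∑ a, θ p a A • ((γ a p)ᵀ * η p + η p * γ a p) := by
    simp only [coordinateForm, transpose_sum, transpose_smul, Matrix.sum_mul, Matrix.mul_sum,
      Matrix.smul_mul, Matrix.mul_smul, ← Finset.sum_add_distrib, smul_add]
  ext b c
  rw [hsum, Matrix.sum_apply]
  simp only [matrixPd, of_apply, Matrix.smul_apply, smul_eq_mul,
    pd_eq_sum_frameDeriv (h.frame_mul_coframe hp), h.metric_compatible p hp]

theorem coordinate_metric_compatible (h : IsLeviCivitaFrame U g E θ η γ) (hp : p ∈ U)
    (A : Fin 4) {Γ : Matrix (Fin 4) (Fin 4) ℝ}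
    (hΓ : Γ * E p = E p * coordinateForm θ γ A p - matrixPd A E p) :
    matrixPd A g p = Γᵀ * g p + g p * Γ := by
  have hE : EntrywiseDifferentiableAt E p :=
    fun i j => (h.contDiffAt_frame p hp i j).differentiableAt two_ne_zero
  have hg := h.differentiableAt_metric hp
  have hgram : matrixPd A η p = (matrixPd A E p)ᵀ * (g p * E p) +
      (E p)ᵀ * (matrixPd A g p * E p + g p * matrixPd A E p) := by
    rw [matrixPd_congr A (eventually_of_mem (h.isOpen.mem_nhds hp) fun q hq => h.gram_eq hq),
      matrixPd_mul A hE.transpose (hg.mul hE), matrixPd_mul A hg hE, matrixPd_transpose]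
  rw [h.matrixPd_gram hp, h.gram_eq hp] at hgram
  have hΩ : E p * coordinateForm θ γ A p = Γ * E p + matrixPd A E p := by rw [hΓ]; abel
  have hΩt : (coordinateForm θ γ A p)ᵀ * (E p)ᵀ = (E p)ᵀ * Γᵀ + (matrixPd A E p)ᵀ := by
    rw [← transpose_mul, hΩ, transpose_add, transpose_mul]
  have hconj : (E p)ᵀ * (matrixPd A g p * E p) = (E p)ᵀ * ((Γᵀ * g p + g p * Γ) * E p) := by
    simp only [Matrix.mul_add, Matrix.add_mul, ← Matrix.mul_assoc, hΩt] at hgram ⊢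
    simp only [Matrix.mul_assoc, hΩ, Matrix.mul_add] at hgram ⊢
    linear_combination (norm := module) -hgram
  have hE : IsUnit (E p) := .of_mul_eq_one _ (h.frame_mul_coframe hp)
  exact hE.mul_right_cancel (((isUnit_transpose _).2 hE).mul_left_cancel hconj)

theorem christoffelForm_mul_frame (h : IsLeviCivitaFrame U g E θ η γ) (hp : p ∈ U) (A : Fin 4) :
    christoffelForm g A p * E p = E p * coordinateForm θ γ A p - matrixPd A E p := by
  set Γ : Fin 4 → Matrix (Fin 4) (Fin 4) ℝ :=
    fun A => (E p * coordinateForm θ γ A p - matrixPd A E p) * θ p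
  have hΓ (A : Fin 4) : Γ A * E p = E p * coordinateForm θ γ A p - matrixPd A E p := by
    rw [Matrix.mul_assoc, h.coframe_mul_frame p hp, Matrix.mul_one]
  rw [christoffelForm_eq_of_metric_torsionFree (h.isUnit_metric hp) (h.isSymm_metric hp)
    (h.coordinate_torsion_free hp) (fun A => h.coordinate_metric_compatible hp A (hΓ A)), hΓ]

theorem differentiableAt_christoffelForm (h : IsLeviCivitaFrame U g E θ η γ) (hp : p ∈ U)
    (A : Fin 4) : EntrywiseDifferentiableAt (christoffelForm g A) p := by
  have hE : EntrywiseDifferentiableAt E p :=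
    fun i j => (h.contDiffAt_frame p hp i j).differentiableAt two_ne_zero
  refine (((hE.mul (h.differentiableAt_coordinateForm hp A)).sub
    (entrywiseDifferentiableAt_matrixPd A (h.contDiffAt_frame p hp))).mul
    (h.differentiableAt_coframe p hp)).congr_of_eventuallyEq
    (eventually_of_mem (h.isOpen.mem_nhds hp) fun q hq => ?_)
  dsimp only
  rw [← h.christoffelForm_mul_frame hq, Matrix.mul_assoc, h.frame_mul_coframe hq, Matrix.mul_one]

theorem curvatureForm_christoffelForm_mul_frame (h : IsLeviCivitaFrame U g E θ η γ) (hp : p ∈ U)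
    (A B : Fin 4) : curvatureForm (christoffelForm g) A B p * E p =
      E p * curvatureForm (coordinateForm θ γ) A B p :=
  curvatureForm_mul_frame h.isOpen hp (h.contDiffAt_frame p hp)
    (h.differentiableAt_christoffelForm hp) (h.differentiableAt_coordinateForm hp)
    (fun _ hq => h.christoffelForm_mul_frame hq) A B

theorem frameDeriv_connection (h : IsLeviCivitaFrame U g E θ η γ) (hp : p ∈ U)
    (a c i j : Fin 4) : frameDeriv E (fun q => γ a q i j) p c =
      ∑ A, (frameDeriv E (fun q => E q A a) p c * coordinateForm θ γ A p i j +
        E p A a * frameDeriv E (fun q => coordinateForm θ γ A q i j) p c) := by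
  have hγ : (fun q => γ a q i j) =ᶠ[𝓝 p]
      fun q => ∑ A, E q A a * coordinateForm θ γ A q i j :=
    eventually_of_mem (h.isOpen.mem_nhds hp) fun q hq => by
      simp only [← h.sum_frame_smul_coordinateForm hq a, Matrix.sum_apply, Matrix.smul_apply,
        smul_eq_mul]
  have hE (A : Fin 4) : DifferentiableAt ℝ (fun q => E q A a) p :=
    (h.contDiffAt_frame p hp A a).differentiableAt two_ne_zero
  have hΩ (A : Fin 4) := h.differentiableAt_coordinateForm hp A i j
  rw [frameDeriv_congr hγ, frameDeriv_sum _ fun A _ => (hE A).fun_mul (hΩ A), Finset.sum_apply]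
  refine Finset.sum_congr rfl fun A _ => ?_
  rw [frameDeriv_mul (hE A) (hΩ A)]
  simp only [Pi.add_apply, Pi.smul_apply, smul_eq_mul]
  ring

theorem sum_bracket_mul_coordinateForm (h : IsLeviCivitaFrame U g E θ η γ) (hp : p ∈ U)
    (a c i j : Fin 4) :
    ∑ A, (frameDeriv E (fun q => E q A a) p c - frameDeriv E (fun q => E q A c) p a) *
        coordinateForm θ γ A p i j = ∑ f, (γ c p f a - γ a p f c) * γ f p i j := by
  calc _ = ∑ A, ∑ f, (γ c p f a - γ a p f c) * (E p A f * coordinateForm θ γ A p i j) := by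
        simp only [h.torsion_free p hp, mul_apply, ← Finset.sum_sub_distrib, Finset.sum_mul]
        exact Finset.sum_congr rfl fun A _ => Finset.sum_congr rfl fun f _ => by ring
    _ = ∑ f, (γ c p f a - γ a p f c) * (∑ A, E p A f • coordinateForm θ γ A p) i j := by
        rw [Finset.sum_comm]
        simp only [← Finset.mul_sum, Matrix.sum_apply, Matrix.smul_apply, smul_eq_mul]
    _ = ∑ f, (γ c p f a - γ a p f c) * γ f p i j := by
        simp only [h.sum_frame_smul_coordinateForm hp]

theorem sum_frame_curvatureForm (h : IsLeviCivitaFrame U g E θ η γ) (hp : p ∈ U)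
    (a c i j : Fin 4) :
    ∑ C, ∑ A, E p C c * E p A a * curvatureForm (coordinateForm θ γ) C A p i j =
      frameDeriv E (fun q => γ a q i j) p c - frameDeriv E (fun q => γ c q i j) p a +
        (γ c p * γ a p - γ a p * γ c p) i j - ∑ f, (γ c p f a - γ a p f c) * γ f p i j := by
  set Ω := coordinateForm θ γ
  have hprod (a c : Fin 4) :
      ∑ C, ∑ A, E p C c * E p A a * (Ω C p * Ω A p) i j = (γ c p * γ a p) i j := by
    rw [← h.sum_frame_smul_coordinateForm hp a, ← h.sum_frame_smul_coordinateForm hp c,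
      Matrix.sum_mul]
    simp only [Matrix.mul_sum, Matrix.smul_mul, Matrix.mul_smul, Matrix.sum_apply,
      Matrix.smul_apply, smul_eq_mul, mul_assoc, mul_left_comm (E p _ a)]
    rfl
  have hderiv (a c : Fin 4) : ∑ C, ∑ A, E p C c * E p A a * matrixPd C (Ω A) p i j =
      frameDeriv E (fun q => γ a q i j) p c -
        ∑ A, frameDeriv E (fun q => E q A a) p c * Ω A p i j := by
    rw [h.frameDeriv_connection hp, Finset.sum_add_distrib, add_sub_cancel_left, Finset.sum_comm]
    simp only [frameDeriv_eq_sum_pd, Finset.mul_sum, matrixPd, of_apply]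
    exact Finset.sum_congr rfl fun A _ => Finset.sum_congr rfl fun C _ => by ring
  have hswap (F : Fin 4 → Fin 4 → ℝ) : ∑ C, ∑ A, E p C c * E p A a * F A C =
      ∑ C, ∑ A, E p C a * E p A c * F C A := by
    rw [Finset.sum_comm]
    simp only [mul_comm (E p _ c)]
  have hbracket := h.sum_bracket_mul_coordinateForm hp a c i j
  simp only [sub_mul, Finset.sum_sub_distrib] at hbracket ⊢
  simp only [curvatureForm, Matrix.add_apply, Matrix.sub_apply, mul_add, mul_sub,
    Finset.sum_add_distrib, Finset.sum_sub_distrib, hprod, hderiv,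
    hswap fun A C => matrixPd A (Ω C) p i j, hswap fun A C => (Ω A p * Ω C p) i j]
  linarith

theorem sum_frame_ricciT (h : IsLeviCivitaFrame U g E θ η γ) (hp : p ∈ U) (a b : Fin 4) :
    ∑ A, ∑ B, E p A a * E p B b * RicciT g A B p = frameRicci E γ p a b := by
  set Ω := coordinateForm θ γ
  have hcontract (A : Fin 4) : ∑ B, E p B b * RicciT g A B p =
      ∑ c, ∑ C, E p C c * curvatureForm Ω C A p c b := by
    calc _ = ∑ C, (curvatureForm (christoffelForm g) C A p * E p) C b := by
          simp only [ricciT_eq_sum_riemannT, riemannT_eq_curvatureForm, mul_apply,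
            Finset.mul_sum, mul_comm]
          exact Finset.sum_comm
      _ = _ := by
          simp only [h.curvatureForm_christoffelForm_mul_frame hp]
          simp only [mul_apply]
          exact Finset.sum_comm
  calc ∑ A, ∑ B, E p A a * E p B b * RicciT g A B p
      = ∑ A, E p A a * ∑ c, ∑ C, E p C c * curvatureForm Ω C A p c b := by
        simp only [← hcontract, Finset.mul_sum, mul_assoc]
    _ = ∑ c, ∑ C, ∑ A, E p C c * E p A a * curvatureForm Ω C A p c b := by
        simp only [Finset.mul_sum, mul_assoc, mul_left_comm (E p _ a)]
        rw [Finset.sum_comm]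
        exact Finset.sum_congr rfl fun c _ => Finset.sum_comm
    _ = frameRicci E γ p a b := by
        have hswap : ∑ c, ∑ f, γ a p c f * γ c p f b = ∑ c, ∑ f, γ a p f c * γ f p c b :=
          Finset.sum_comm
        simp only [Ω, h.sum_frame_curvatureForm hp, frameRicci, Matrix.sub_apply, mul_apply,
          sub_mul, Finset.sum_add_distrib, Finset.sum_sub_distrib, hswap,
          mul_comm (γ _ p _ b)]
        ring

theorem ricciT_eq_zero (h : IsLeviCivitaFrame U g E θ η γ) (hp : p ∈ U)
    (hricci : frameRicci E γ p = 0) (A B : Fin 4) : RicciT g A B p = 0 := by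
  set R : Matrix (Fin 4) (Fin 4) ℝ := of fun A B => RicciT g A B p with hR
  have hframe : (E p)ᵀ * (R * E p) = 0 := by
    ext a b
    simpa only [hricci, mul_apply, transpose_apply, hR, of_apply, Finset.mul_sum, mul_assoc,
      mul_comm (RicciT g _ _ p), Pi.zero_apply, Matrix.zero_apply] using h.sum_frame_ricciT hp a b
  have hE : IsUnit (E p) := .of_mul_eq_one _ (h.frame_mul_coframe hp)
  have hR0 : R = 0 := by
    rwa [((isUnit_transpose _).2 hE).mul_right_eq_zero, hE.mul_left_eq_zero] at hframe
  exact congrFun₂ hR0 A B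

end IsLeviCivitaFrame

/-! ### Structure equations of the Kerr family -/

/-- The functions in terms of which the metrics of the Kerr family, their frame connection and their
curvature are polynomial: the coefficient `G` of `dx² + dy²`, the real and imaginary parts of
`1 / ζ = τ - i σ` with `ζ = φ + i r`, half the logarithmic derivatives `a₀, a₁` of `G` along
`e₀, e₁`, and the derivatives of `1 / ζ` along `e₀, e₁`, divided by `G` and encoded by `b₀, b₁`. -/
structure KerrScalars where
  G : (Fin 4 → ℝ) → ℝ
  σ : (Fin 4 → ℝ) → ℝ
  τ : (Fin 4 → ℝ) → ℝ
  a₀ : (Fin 4 → ℝ) → ℝ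
  a₁ : (Fin 4 → ℝ) → ℝ
  b₀ : (Fin 4 → ℝ) → ℝ
  b₁ : (Fin 4 → ℝ) → ℝ

namespace KerrScalars

/-- The coefficients `c_ab` in the brackets `[e_a, e_b] = c_ab (e₃ - e₂)` of the moving frame. -/
def bracketCoeff (F : KerrScalars) (p : Fin 4 → ℝ) : Matrix (Fin 4) (Fin 4) ℝ :=
  !![0, 4 * F.G p * F.τ p, 0, 0;
    -4 * F.G p * F.τ p, 0, 0, 0;
    0, 0, 0, 0;
    0, 0, 0, 0]

/-- The structure equations of the Kerr family: the columns of `E` form the frame `e₀, …, e₃` with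
`e₂ = ∂_v` and `e₃ = ∂_r`, and its brackets and the frame derivatives of the scalars are
polynomial in the scalars. Of the derivatives of `a` and `b` along `e₀, e₁`, only the combinations
entering the Ricci tensor are prescribed. -/
structure StructureEquations (F : KerrScalars) (U : Set (Fin 4 → ℝ)) (E : MatrixField) :
    Prop where
  G_ne_zero : ∀ p ∈ U, F.G p ≠ 0
  differentiableAt_G : ∀ p ∈ U, DifferentiableAt ℝ F.G p
  differentiableAt_σ : ∀ p ∈ U, DifferentiableAt ℝ F.σ p
  differentiableAt_τ : ∀ p ∈ U, DifferentiableAt ℝ F.τ p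
  differentiableAt_a₀ : ∀ p ∈ U, DifferentiableAt ℝ F.a₀ p
  differentiableAt_a₁ : ∀ p ∈ U, DifferentiableAt ℝ F.a₁ p
  differentiableAt_b₀ : ∀ p ∈ U, DifferentiableAt ℝ F.b₀ p
  differentiableAt_b₁ : ∀ p ∈ U, DifferentiableAt ℝ F.b₁ p
  frameDeriv_G : ∀ p ∈ U, frameDeriv E F.G p =
    ![2 * F.a₀ p * F.G p, 2 * F.a₁ p * F.G p, 0, 2 * F.σ p * F.G p]
  frameDeriv_σ : ∀ p ∈ U, frameDeriv E F.σ p =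
    ![-(F.G p * F.b₀ p), -(F.G p * F.b₁ p), 0, F.τ p ^ 2 - F.σ p ^ 2]
  frameDeriv_τ : ∀ p ∈ U, frameDeriv E F.τ p =
    ![F.G p * F.b₁ p, -(F.G p * F.b₀ p), 0, -2 * F.σ p * F.τ p]
  frameDeriv_a₀_two : ∀ p ∈ U, frameDeriv E F.a₀ p 2 = 0
  frameDeriv_a₁_two : ∀ p ∈ U, frameDeriv E F.a₁ p 2 = 0
  frameDeriv_a₀_three : ∀ p ∈ U, frameDeriv E F.a₀ p 3 = -(F.G p * F.b₀ p)
  frameDeriv_a₁_three : ∀ p ∈ U, frameDeriv E F.a₁ p 3 = -(F.G p * F.b₁ p)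
  curl_a : ∀ p ∈ U,
    frameDeriv E F.a₁ p 0 - frameDeriv E F.a₀ p 1 = 4 * F.G p * F.σ p * F.τ p
  div_a : ∀ p ∈ U,
    frameDeriv E F.a₀ p 0 + frameDeriv E F.a₁ p 1 = F.G p * (6 * F.τ p ^ 2 + 2 * F.σ p ^ 2)
  frameDeriv_b₀_three : ∀ p ∈ U,
    frameDeriv E F.b₀ p 3 = -2 * F.τ p * F.b₁ p - 4 * F.σ p * F.b₀ p
  frameDeriv_b₁_three : ∀ p ∈ U,
    frameDeriv E F.b₁ p 3 = 2 * F.τ p * F.b₀ p - 4 * F.σ p * F.b₁ p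
  div_b : ∀ p ∈ U, frameDeriv E F.b₀ p 0 + frameDeriv E F.b₁ p 1 =
    8 * F.σ p * F.τ p ^ 2 - 2 * (F.a₀ p * F.b₀ p + F.a₁ p * F.b₁ p)
  bracket : ∀ p ∈ U, ∀ a b A,
    frameDeriv E (fun q => E q A b) p a - frameDeriv E (fun q => E q A a) p b =
      F.bracketCoeff p a b * (E p A 3 - E p A 2)

/-- The Gram matrix of the frame for the Kerr metric with mass parameter `K = 𝐤 m`, in which
`g = G (dx² + dy²) + θ ∨ β + (1 + K σ) / 2 θ²` with `β = dv + dr - θ`. -/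
noncomputable def gram (F : KerrScalars) (K : ℝ) : MatrixField := fun p =>
  !![F.G p, 0, 0, 0;
    0, F.G p, 0, 0;
    0, 0, 1 / 2 + K / 2 * F.σ p, 1 / 2;
    0, 0, 1 / 2, 0]

/-- The Levi-Civita connection matrices `(γ_a)^c_b` of the Kerr metric in the frame, as given by
Koszul's formula for the Gram matrix `gram` and the brackets `bracketCoeff`. -/
noncomputable def connection (F : KerrScalars) (K : ℝ) : Fin 4 → MatrixField :=
  ![fun p =>
    !![F.a₀ p, F.a₁ p, 0, F.σ p;
      -F.a₁ p, F.a₀ p, K * F.σ p * F.τ p, F.τ p;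
      -2 * F.G p * F.σ p, -2 * F.G p * F.τ p, 0, 0;
      2 * (1 + K * F.σ p) * F.G p * F.σ p, 2 * F.G p * F.τ p, -K / 2 * F.G p * F.b₀ p, 0],
  fun p =>
    !![F.a₁ p, -F.a₀ p, -K * F.σ p * F.τ p, -F.τ p;
      F.a₀ p, F.a₁ p, 0, F.σ p;
      2 * F.G p * F.τ p, -2 * F.G p * F.σ p, 0, 0;
      -2 * F.G p * F.τ p, 2 * (1 + K * F.σ p) * F.G p * F.σ p, -K / 2 * F.G p * F.b₁ p, 0],
  fun p =>
    !![0, -K * F.σ p * F.τ p, K / 4 * F.b₀ p, 0;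
      K * F.σ p * F.τ p, 0, K / 4 * F.b₁ p, 0;
      0, 0, -K / 2 * (F.τ p ^ 2 - F.σ p ^ 2), 0;
      -K / 2 * F.G p * F.b₀ p, -K / 2 * F.G p * F.b₁ p,
        K / 2 * (1 + K * F.σ p) * (F.τ p ^ 2 - F.σ p ^ 2), K / 2 * (F.τ p ^ 2 - F.σ p ^ 2)],
  fun p =>
    !![F.σ p, -F.τ p, 0, 0;
      F.τ p, F.σ p, 0, 0;
      0, 0, 0, 0;
      0, 0, K / 2 * (F.τ p ^ 2 - F.σ p ^ 2), 0]]

theorem connection_torsion (F : KerrScalars) (K : ℝ) (p : Fin 4 → ℝ) (a b c : Fin 4) :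
    F.connection K a p c b - F.connection K b p c a =
      F.bracketCoeff p a b * ![0, 0, -1, 1] c := by
  fin_cases a <;> fin_cases b <;> fin_cases c <;>
    simp only [connection, bracketCoeff, of_apply, cons_val, Fin.reduceFinMk, Fin.zero_eta,
      Fin.isValue, Fin.mk_one] <;>
    ring

namespace StructureEquations

variable {F : KerrScalars} {U : Set (Fin 4 → ℝ)} {E : MatrixField} {p : Fin 4 → ℝ}

theorem torsion_free (h : F.StructureEquations U E) (K : ℝ) (hp : p ∈ U) (a b A : Fin 4) :
    frameDeriv E (fun q => E q A b) p a - frameDeriv E (fun q => E q A a) p b =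
      (E p * F.connection K a p) A b - (E p * F.connection K b p) A a := by
  simp only [h.bracket p hp, mul_apply, ← Finset.sum_sub_distrib, ← mul_sub, connection_torsion]
  simp only [Fin.sum_univ_four, cons_val]
  ring

theorem metric_compatible (h : F.StructureEquations U E) (K : ℝ) (hp : p ∈ U) (a b c : Fin 4) :
    frameDeriv E (fun q => F.gram K q b c) p a =
      ((F.connection K a p)ᵀ * F.gram K p + F.gram K p * F.connection K a p) b c := by
  have hσ := h.differentiableAt_σ p hp
  fin_cases a <;> fin_cases b <;> fin_cases c <;>
    simp (disch := fun_prop) only [gram, connection, of_apply, cons_val, Fin.reduceFinMk,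
      Fin.zero_eta, Fin.isValue, Fin.mk_one, Matrix.add_apply, mul_apply, transpose_apply,
      Fin.sum_univ_four, frameDeriv_const, frameDeriv_add, frameDeriv_mul, h.frameDeriv_G p hp,
      h.frameDeriv_σ p hp, Pi.add_apply, Pi.smul_apply, Pi.zero_apply, smul_eq_mul] <;>
    ring

theorem frameRicci_eq_zero (h : F.StructureEquations U E) (K : ℝ) (hp : p ∈ U) :
    frameRicci E (F.connection K) p = 0 := by
  have hG := h.differentiableAt_G p hp
  have hσ := h.differentiableAt_σ p hp
  have hτ := h.differentiableAt_τ p hp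
  have hb₀ := h.differentiableAt_b₀ p hp
  have hb₁ := h.differentiableAt_b₁ p hp
  ext a b
  /- Derivatives of `a` and `b` along `e₀, e₁` enter only the components with both indices in
  `{0, 1}` and the component `(2, 2)`; the others are polynomial identities in the scalars. -/
  fin_cases a <;> fin_cases b <;>
    simp (disch := fun_prop) only [frameRicci, connection, of_apply, cons_val, Fin.reduceFinMk,
      Fin.zero_eta, Fin.isValue, Fin.mk_one, Fin.sum_univ_four, frameDeriv_const, frameDeriv_add,
      frameDeriv_sub, frameDeriv_neg, frameDeriv_mul, frameDeriv_pow, h.frameDeriv_G p hp,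
      h.frameDeriv_σ p hp, h.frameDeriv_τ p hp, h.frameDeriv_a₀_two p hp,
      h.frameDeriv_a₁_two p hp, h.frameDeriv_a₀_three p hp, h.frameDeriv_a₁_three p hp,
      h.frameDeriv_b₀_three p hp, h.frameDeriv_b₁_three p hp, Pi.add_apply, Pi.sub_apply,
      Pi.neg_apply, Pi.smul_apply, Pi.zero_apply, smul_eq_mul] <;>
    first
    | ring1
    | linear_combination -h.div_a p hp
    | linear_combination h.curl_a p hp
    | linear_combination -h.curl_a p hp
    | linear_combination K / 4 * h.div_b p hp

theorem differentiableAt_connection (h : F.StructureEquations U E) (K : ℝ) (hp : p ∈ U)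
    (a : Fin 4) : EntrywiseDifferentiableAt (F.connection K a) p := by
  have hG := h.differentiableAt_G p hp
  have hσ := h.differentiableAt_σ p hp
  have hτ := h.differentiableAt_τ p hp
  have ha₀ := h.differentiableAt_a₀ p hp
  have ha₁ := h.differentiableAt_a₁ p hp
  have hb₀ := h.differentiableAt_b₀ p hp
  have hb₁ := h.differentiableAt_b₁ p hp
  intro i j
  fin_cases a <;> fin_cases i <;> fin_cases j <;>
    simp only [connection, of_apply, cons_val, Fin.reduceFinMk, Fin.zero_eta, Fin.isValue,
      Fin.mk_one] <;>
    fun_prop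

theorem isLeviCivitaFrame (h : F.StructureEquations U E) (K : ℝ) (hU : IsOpen U)
    (hE : ∀ p ∈ U, ∀ i j, ContDiffAt ℝ 2 (fun q => E q i j) p) {g θ : MatrixField}
    (hθ : ∀ p ∈ U, EntrywiseDifferentiableAt θ p) (hθE : ∀ p ∈ U, θ p * E p = 1)
    (hg : ∀ p ∈ U, g p = (θ p)ᵀ * F.gram K p * θ p) :
    IsLeviCivitaFrame U g E θ (F.gram K) (F.connection K) where
  isOpen := hU
  contDiffAt_frame := hE
  differentiableAt_coframe := hθ
  differentiableAt_gram p hp i j := by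
    have hG := h.differentiableAt_G p hp
    have hσ := h.differentiableAt_σ p hp
    fin_cases i <;> fin_cases j <;>
      simp only [gram, of_apply, cons_val, Fin.reduceFinMk, Fin.zero_eta, Fin.isValue,
        Fin.mk_one] <;>
      fun_prop
  differentiableAt_connection _ hp := h.differentiableAt_connection K hp
  coframe_mul_frame := hθE
  metric_eq := hg
  isSymm_gram p _ := by
    ext i j
    fin_cases i <;> fin_cases j <;> rfl
  isUnit_gram p hp := by
    have hdet : (F.gram K p).det = -(F.G p ^ 2 / 4) := by
      simp [gram, det_succ_row_zero, Fin.sum_univ_succ]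
      ring
    rw [isUnit_iff_isUnit_det, hdet, isUnit_iff_ne_zero]
    simpa using h.G_ne_zero p hp
  metric_compatible _ hp := h.metric_compatible K hp
  torsion_free _ hp := h.torsion_free K hp

end StructureEquations

end KerrScalars

/-! ### The Kerr family -/

/-- The frame `e₀ = ∂_x + φ_y (∂_v - ∂_r)`, `e₁ = ∂_y - φ_x (∂_v - ∂_r)`, `e₂ = ∂_v`, `e₃ = ∂_r`
adapted to the Kerr family; it is dual to `dx, dy, θ, dv + dr - θ`. -/
noncomputable def kerrFrame (φ : ℝ × ℝ → ℝ) : MatrixField := fun p =>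
  !![1, 0, 0, 0;
    0, 1, 0, 0;
    pdy φ (p 0, p 1), -pdx φ (p 0, p 1), 1, 0;
    -pdy φ (p 0, p 1), pdx φ (p 0, p 1), 0, 1]

/-- The coframe `dx, dy, θ, dv + dr - θ` adapted to the Kerr family. -/
noncomputable def kerrCoframe (φ : ℝ × ℝ → ℝ) : MatrixField := fun p =>
  !![1, 0, 0, 0;
    0, 1, 0, 0;
    -pdy φ (p 0, p 1), pdx φ (p 0, p 1), 1, 0;
    pdy φ (p 0, p 1), -pdx φ (p 0, p 1), 0, 1]

theorem kerrCoframe_mul_kerrFrame (φ : ℝ × ℝ → ℝ) (p : Fin 4 → ℝ) :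
    kerrCoframe φ p * kerrFrame φ p = 1 := by
  ext i j
  fin_cases i <;> fin_cases j <;> simp [kerrCoframe, kerrFrame, mul_apply, Fin.sum_univ_four]

/-- The squared modulus `S = r² + φ²` of `ζ = φ + i r`. -/
def kerrS (φ : ℝ × ℝ → ℝ) (p : Fin 4 → ℝ) : ℝ := p 3 ^ 2 + φ (p 0, p 1) ^ 2

/-- The real number `σ` in `1 / ζ = τ - i σ`, where `ζ = φ + i r`. -/
noncomputable def kerrσ (φ : ℝ × ℝ → ℝ) (p : Fin 4 → ℝ) : ℝ := p 3 / kerrS φ p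

/-- The real number `τ` in `1 / ζ = τ - i σ`, where `ζ = φ + i r`. -/
noncomputable def kerrτ (φ : ℝ × ℝ → ℝ) (p : Fin 4 → ℝ) : ℝ := φ (p 0, p 1) / kerrS φ p

/-- The factor `u` for which `4 u² (dx² + dy²)` has constant curvature `κ`. -/
noncomputable def conformalFactor (κ : ℝ) (p : Fin 4 → ℝ) : ℝ :=
  1 / (1 + κ * (p 0 ^ 2 + p 1 ^ 2))

/-- The coefficient of `dx² + dy²` in the metrics of the Kerr family. -/
noncomputable def kerrG (κ : ℝ) (φ : ℝ × ℝ → ℝ) (p : Fin 4 → ℝ) : ℝ :=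
  -2 * κ * kerrS φ p * conformalFactor κ p ^ 2

/-- The scalars of the Kerr family with potential `φ`. -/
noncomputable def kerrScalars (κ : ℝ) (φ : ℝ × ℝ → ℝ) : KerrScalars where
  G := kerrG κ φ
  σ := kerrσ φ
  τ := kerrτ φ
  a₀ p := pdx φ (p 0, p 1) * kerrτ φ p - pdy φ (p 0, p 1) * kerrσ φ p -
    2 * κ * p 0 * conformalFactor κ p
  a₁ p := pdx φ (p 0, p 1) * kerrσ φ p + pdy φ (p 0, p 1) * kerrτ φ p -
    2 * κ * p 1 * conformalFactor κ p
  b₀ p := (2 * pdx φ (p 0, p 1) * kerrσ φ p * kerrτ φ p +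
    pdy φ (p 0, p 1) * (kerrτ φ p ^ 2 - kerrσ φ p ^ 2)) / kerrG κ φ p
  b₁ p := (2 * pdy φ (p 0, p 1) * kerrσ φ p * kerrτ φ p -
    pdx φ (p 0, p 1) * (kerrτ φ p ^ 2 - kerrσ φ p ^ 2)) / kerrG κ φ p

/-- The coordinate metric of the Kerr family is regular at `p`, and the potential `φ` solves the
field equation there. -/
structure IsKerrPoint (κ : ℝ) (φ : ℝ × ℝ → ℝ) (p : Fin 4 → ℝ) : Prop where
  curvature_ne_zero : κ ≠ 0
  contDiffAt : ContDiffAt ℝ 3 φ (p 0, p 1)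
  conformal_ne_zero : 1 + κ * (p 0 ^ 2 + p 1 ^ 2) ≠ 0
  S_ne_zero : kerrS φ p ≠ 0
  lap_eq : lap φ (p 0, p 1) +
    8 * κ * φ (p 0, p 1) / (1 + κ * (p 0 ^ 2 + p 1 ^ 2)) ^ 2 = 0

theorem frameDeriv_coord (E : MatrixField) (p : Fin 4 → ℝ) (A : Fin 4) :
    frameDeriv E (fun q => q A) p = E p A := by
  ext a
  have h : fderiv ℝ (fun q : Fin 4 → ℝ => q A) p = ContinuousLinearMap.proj A :=
    (ContinuousLinearMap.proj (R := ℝ) (φ := fun _ : Fin 4 => ℝ) A).fderiv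
  rw [frameDeriv, h]
  rfl

theorem frameDeriv_kerrFrame_comp {φ f : ℝ × ℝ → ℝ} {p : Fin 4 → ℝ}
    (hf : DifferentiableAt ℝ f (p 0, p 1)) :
    frameDeriv (kerrFrame φ) (fun q => f (q 0, q 1)) p =
      ![pdx f (p 0, p 1), pdy f (p 0, p 1), 0, 0] := by
  set L : (Fin 4 → ℝ) →L[ℝ] ℝ × ℝ := (ContinuousLinearMap.proj 0).prod (.proj 1)
  have h : fderiv ℝ (fun q => f (q 0, q 1)) p = (fderiv ℝ f (p 0, p 1)).comp L :=
    (hf.hasFDerivAt.comp p L.hasFDerivAt).fderiv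
  have hcol (a : Fin 4) : L ((kerrFrame φ p).col a) = (kerrFrame φ p 0 a, kerrFrame φ p 1 a) := rfl
  ext a
  rw [frameDeriv, h, ContinuousLinearMap.comp_apply, hcol]
  fin_cases a <;> simp [kerrFrame, pdx, pdy, Prod.mk_zero_zero]

theorem frameDeriv_kerrFrame_r (φ : ℝ × ℝ → ℝ) (p : Fin 4 → ℝ) :
    frameDeriv (kerrFrame φ) (fun q => q 3) p = ![-pdy φ (p 0, p 1), pdx φ (p 0, p 1), 0, 1] := by
  rw [frameDeriv_coord]
  rfl

namespace IsKerrPoint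

variable {κ : ℝ} {φ : ℝ × ℝ → ℝ} {p : Fin 4 → ℝ}

theorem contDiffAt_pdx (h : IsKerrPoint κ φ p) : ContDiffAt ℝ 2 (pdx φ) (p 0, p 1) :=
  contDiffAt_fderiv_apply h.contDiffAt (by norm_num) _

theorem contDiffAt_pdy (h : IsKerrPoint κ φ p) : ContDiffAt ℝ 2 (pdy φ) (p 0, p 1) :=
  contDiffAt_fderiv_apply h.contDiffAt (by norm_num) _

theorem pdy_pdx (h : IsKerrPoint κ φ p) : pdy (pdx φ) (p 0, p 1) = pdx (pdy φ) (p 0, p 1) :=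
  fderiv_fderiv_apply_comm (h.contDiffAt.of_le (by norm_num)) _ _

theorem differentiableAt_φ (h : IsKerrPoint κ φ p) : DifferentiableAt ℝ φ (p 0, p 1) :=
  h.contDiffAt.differentiableAt three_ne_zero

theorem differentiableAt_pdx (h : IsKerrPoint κ φ p) : DifferentiableAt ℝ (pdx φ) (p 0, p 1) :=
  h.contDiffAt_pdx.differentiableAt two_ne_zero

theorem differentiableAt_pdy (h : IsKerrPoint κ φ p) : DifferentiableAt ℝ (pdy φ) (p 0, p 1) :=
  h.contDiffAt_pdy.differentiableAt two_ne_zero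

theorem differentiableAt_S (h : IsKerrPoint κ φ p) : DifferentiableAt ℝ (kerrS φ) p := by
  have hφ := h.differentiableAt_φ
  unfold kerrS
  fun_prop

theorem differentiableAt_σ (h : IsKerrPoint κ φ p) : DifferentiableAt ℝ (kerrσ φ) p :=
  differentiableAt_div (by fun_prop) h.differentiableAt_S h.S_ne_zero

theorem differentiableAt_τ (h : IsKerrPoint κ φ p) : DifferentiableAt ℝ (kerrτ φ) p :=
  have hφ := h.differentiableAt_φ
  differentiableAt_div (by fun_prop) h.differentiableAt_S h.S_ne_zero

theorem differentiableAt_conformalFactor (h : IsKerrPoint κ φ p) :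
    DifferentiableAt ℝ (conformalFactor κ) p :=
  differentiableAt_div (by fun_prop) (by fun_prop) h.conformal_ne_zero

theorem differentiableAt_G (h : IsKerrPoint κ φ p) : DifferentiableAt ℝ (kerrG κ φ) p := by
  have := h.differentiableAt_S
  have := h.differentiableAt_conformalFactor
  unfold kerrG
  fun_prop

theorem G_ne_zero (h : IsKerrPoint κ φ p) : kerrG κ φ p ≠ 0 := by
  simp [kerrG, conformalFactor, h.curvature_ne_zero, h.S_ne_zero, h.conformal_ne_zero]

theorem σ_sq_add_τ_sq (h : IsKerrPoint κ φ p) : kerrσ φ p ^ 2 + kerrτ φ p ^ 2 = 1 / kerrS φ p := by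
  have hS := h.S_ne_zero
  rw [kerrσ, kerrτ, div_pow, div_pow, ← add_div, div_eq_div_iff (pow_ne_zero 2 hS) hS, kerrS]
  ring

theorem pdx_pdx_add_pdy_pdy (h : IsKerrPoint κ φ p) :
    pdx (pdx φ) (p 0, p 1) + pdy (pdy φ) (p 0, p 1) = 4 * kerrG κ φ p * kerrτ φ p := by
  have hS := h.S_ne_zero
  have hu := h.conformal_ne_zero
  have hlap : lap φ (p 0, p 1) = 4 * kerrG κ φ p * kerrτ φ p := by
    rw [eq_neg_of_add_eq_zero_left h.lap_eq, kerrG, kerrτ, conformalFactor]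
    field_simp
    ring
  exact hlap

theorem frameDeriv_pdx (h : IsKerrPoint κ φ p) :
    frameDeriv (kerrFrame φ) (fun q => pdx φ (q 0, q 1)) p =
      ![pdx (pdx φ) (p 0, p 1), pdx (pdy φ) (p 0, p 1), 0, 0] := by
  rw [frameDeriv_kerrFrame_comp h.differentiableAt_pdx, h.pdy_pdx]

theorem frameDeriv_pdy (h : IsKerrPoint κ φ p) :
    frameDeriv (kerrFrame φ) (fun q => pdy φ (q 0, q 1)) p =
      ![pdx (pdy φ) (p 0, p 1), pdy (pdy φ) (p 0, p 1), 0, 0] :=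
  frameDeriv_kerrFrame_comp h.differentiableAt_pdy

theorem frameDeriv_S (h : IsKerrPoint κ φ p) : frameDeriv (kerrFrame φ) (kerrS φ) p =
    (2 * p 3) • ![-pdy φ (p 0, p 1), pdx φ (p 0, p 1), 0, 1] +
      (2 * φ (p 0, p 1)) • ![pdx φ (p 0, p 1), pdy φ (p 0, p 1), 0, 0] := by
  have hφ := h.differentiableAt_φ
  have hS : kerrS φ = fun q => q 3 ^ 2 + φ (q 0, q 1) ^ 2 := rfl
  rw [hS, frameDeriv_add (by fun_prop) (by fun_prop), frameDeriv_pow _ (by fun_prop),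
    frameDeriv_pow _ (by fun_prop), frameDeriv_kerrFrame_r,
    frameDeriv_kerrFrame_comp hφ]
  norm_num

theorem frameDeriv_conformalFactor (h : IsKerrPoint κ φ p) :
    frameDeriv (kerrFrame φ) (conformalFactor κ) p =
      (-2 * κ * conformalFactor κ p ^ 2) • ![p 0, p 1, 0, 0] := by
  have hu : conformalFactor κ = fun q => 1 / (1 + κ * (q 0 ^ 2 + q 1 ^ 2)) := rfl
  have hne := h.conformal_ne_zero
  ext a
  rw [hu, frameDeriv_div (by fun_prop) (by fun_prop) hne]
  fin_cases a <;>
    simp (disch := fun_prop) only [frameDeriv_add, frameDeriv_mul, frameDeriv_pow, frameDeriv_const,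
      frameDeriv_coord, kerrFrame, Pi.add_apply, Pi.sub_apply, Pi.smul_apply, Pi.zero_apply,
      smul_eq_mul, one_div, inv_pow, of_apply, cons_val, Fin.zero_eta, Fin.mk_one,
      Fin.reduceFinMk, Fin.isValue] <;>
    ring

theorem frameDeriv_G (h : IsKerrPoint κ φ p) : frameDeriv (kerrFrame φ) (kerrG κ φ) p =
    ![2 * (kerrScalars κ φ).a₀ p * kerrG κ φ p, 2 * (kerrScalars κ φ).a₁ p * kerrG κ φ p, 0,
      2 * kerrσ φ p * kerrG κ φ p] := by
  have hG : kerrG κ φ = fun q => -2 * κ * kerrS φ q * conformalFactor κ q ^ 2 := rfl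
  have hS := h.differentiableAt_S
  have hu := h.differentiableAt_conformalFactor
  have hne := h.S_ne_zero
  ext a
  rw [hG, frameDeriv_mul (by fun_prop) (by fun_prop), frameDeriv_mul (by fun_prop) hS,
    frameDeriv_const, frameDeriv_pow _ hu, h.frameDeriv_S, h.frameDeriv_conformalFactor]
  fin_cases a <;>
    simp only [kerrScalars, kerrσ, kerrτ, Pi.add_apply, Pi.smul_apply, Pi.zero_apply, smul_eq_mul,
      cons_val, Fin.zero_eta, Fin.mk_one, Fin.reduceFinMk, Fin.isValue] <;>
    field_simp <;>
    ring

theorem frameDeriv_σ (h : IsKerrPoint κ φ p) : frameDeriv (kerrFrame φ) (kerrσ φ) p =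
    ![-(kerrG κ φ p * (kerrScalars κ φ).b₀ p), -(kerrG κ φ p * (kerrScalars κ φ).b₁ p), 0,
      kerrτ φ p ^ 2 - kerrσ φ p ^ 2] := by
  have hσ : kerrσ φ = fun q => q 3 / kerrS φ q := rfl
  have hne := h.S_ne_zero
  have hG := h.G_ne_zero
  ext a
  rw [hσ, frameDeriv_div (by fun_prop) h.differentiableAt_S hne, frameDeriv_kerrFrame_r,
    h.frameDeriv_S]
  fin_cases a <;>
    simp only [kerrScalars, kerrσ, kerrτ, Pi.add_apply, Pi.sub_apply, Pi.smul_apply, smul_eq_mul,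
      cons_val, Fin.zero_eta, Fin.mk_one, Fin.reduceFinMk, Fin.isValue] <;>
    field_simp <;>
    simp only [kerrS] <;>
    ring

theorem frameDeriv_τ (h : IsKerrPoint κ φ p) : frameDeriv (kerrFrame φ) (kerrτ φ) p =
    ![kerrG κ φ p * (kerrScalars κ φ).b₁ p, -(kerrG κ φ p * (kerrScalars κ φ).b₀ p), 0,
      -2 * kerrσ φ p * kerrτ φ p] := by
  have hτ : kerrτ φ = fun q => φ (q 0, q 1) / kerrS φ q := rfl
  have hφ := h.differentiableAt_φ
  have hne := h.S_ne_zero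
  have hG := h.G_ne_zero
  ext a
  rw [hτ, frameDeriv_div (by fun_prop) h.differentiableAt_S hne, frameDeriv_kerrFrame_comp hφ,
    h.frameDeriv_S]
  fin_cases a <;>
    simp only [kerrScalars, kerrσ, kerrτ, Pi.add_apply, Pi.sub_apply, Pi.smul_apply, smul_eq_mul,
      cons_val, Fin.zero_eta, Fin.mk_one, Fin.reduceFinMk, Fin.isValue] <;>
    field_simp <;>
    simp only [kerrS] <;>
    ring

theorem frameDeriv_a₀ (h : IsKerrPoint κ φ p) :
    frameDeriv (kerrFrame φ) (kerrScalars κ φ).a₀ p =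
      kerrτ φ p • frameDeriv (kerrFrame φ) (fun q => pdx φ (q 0, q 1)) p -
        kerrσ φ p • frameDeriv (kerrFrame φ) (fun q => pdy φ (q 0, q 1)) p +
        pdx φ (p 0, p 1) • frameDeriv (kerrFrame φ) (kerrτ φ) p -
        pdy φ (p 0, p 1) • frameDeriv (kerrFrame φ) (kerrσ φ) p -
        (2 * κ * conformalFactor κ p) • kerrFrame φ p 0 -
        (2 * κ * p 0) • frameDeriv (kerrFrame φ) (conformalFactor κ) p := by
  have hx := h.differentiableAt_pdx
  have hy := h.differentiableAt_pdy
  have hσ := h.differentiableAt_σ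
  have hτ := h.differentiableAt_τ
  have hu := h.differentiableAt_conformalFactor
  simp (disch := fun_prop) only [kerrScalars, frameDeriv_sub, frameDeriv_mul, frameDeriv_const,
    frameDeriv_coord]
  module

theorem frameDeriv_a₁ (h : IsKerrPoint κ φ p) :
    frameDeriv (kerrFrame φ) (kerrScalars κ φ).a₁ p =
      kerrσ φ p • frameDeriv (kerrFrame φ) (fun q => pdx φ (q 0, q 1)) p +
        kerrτ φ p • frameDeriv (kerrFrame φ) (fun q => pdy φ (q 0, q 1)) p +
        pdx φ (p 0, p 1) • frameDeriv (kerrFrame φ) (kerrσ φ) p +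
        pdy φ (p 0, p 1) • frameDeriv (kerrFrame φ) (kerrτ φ) p -
        (2 * κ * conformalFactor κ p) • kerrFrame φ p 1 -
        (2 * κ * p 1) • frameDeriv (kerrFrame φ) (conformalFactor κ) p := by
  have hx := h.differentiableAt_pdx
  have hy := h.differentiableAt_pdy
  have hσ := h.differentiableAt_σ
  have hτ := h.differentiableAt_τ
  have hu := h.differentiableAt_conformalFactor
  simp (disch := fun_prop) only [kerrScalars, frameDeriv_add, frameDeriv_sub, frameDeriv_mul,
    frameDeriv_const, frameDeriv_coord]
  module

theorem G_mul_b₀ (h : IsKerrPoint κ φ p) : kerrG κ φ p * (kerrScalars κ φ).b₀ p =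
    2 * pdx φ (p 0, p 1) * kerrσ φ p * kerrτ φ p +
      pdy φ (p 0, p 1) * (kerrτ φ p ^ 2 - kerrσ φ p ^ 2) :=
  mul_div_cancel₀ _ h.G_ne_zero

theorem G_mul_b₁ (h : IsKerrPoint κ φ p) : kerrG κ φ p * (kerrScalars κ φ).b₁ p =
    2 * pdy φ (p 0, p 1) * kerrσ φ p * kerrτ φ p -
      pdx φ (p 0, p 1) * (kerrτ φ p ^ 2 - kerrσ φ p ^ 2) :=
  mul_div_cancel₀ _ h.G_ne_zero

theorem G_mul_σ_sq_add_τ_sq (h : IsKerrPoint κ φ p) :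
    kerrG κ φ p * (kerrσ φ p ^ 2 + kerrτ φ p ^ 2) = -2 * κ * conformalFactor κ p ^ 2 := by
  have hS := h.S_ne_zero
  rw [h.σ_sq_add_τ_sq, kerrG]
  field_simp

theorem conformalFactor_eq_sq_mul (h : IsKerrPoint κ φ p) :
    conformalFactor κ p = conformalFactor κ p ^ 2 * (1 + κ * (p 0 ^ 2 + p 1 ^ 2)) := by
  have hu := h.conformal_ne_zero
  rw [conformalFactor]
  field_simp

theorem curl_a (h : IsKerrPoint κ φ p) :
    frameDeriv (kerrFrame φ) (kerrScalars κ φ).a₁ p 0 -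
      frameDeriv (kerrFrame φ) (kerrScalars κ φ).a₀ p 1 =
        4 * kerrG κ φ p * kerrσ φ p * kerrτ φ p := by
  simp only [h.frameDeriv_a₀, h.frameDeriv_a₁, h.frameDeriv_pdx, h.frameDeriv_pdy, h.frameDeriv_σ,
    h.frameDeriv_τ, h.frameDeriv_conformalFactor, kerrFrame, of_apply, cons_val, Pi.add_apply,
    Pi.sub_apply, Pi.smul_apply, smul_eq_mul]
  linear_combination kerrσ φ p * h.pdx_pdx_add_pdy_pdy

theorem div_a (h : IsKerrPoint κ φ p) :
    frameDeriv (kerrFrame φ) (kerrScalars κ φ).a₀ p 0 +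
      frameDeriv (kerrFrame φ) (kerrScalars κ φ).a₁ p 1 =
        kerrG κ φ p * (6 * kerrτ φ p ^ 2 + 2 * kerrσ φ p ^ 2) := by
  simp only [h.frameDeriv_a₀, h.frameDeriv_a₁, h.frameDeriv_pdx, h.frameDeriv_pdy, h.frameDeriv_σ,
    h.frameDeriv_τ, h.frameDeriv_conformalFactor, kerrFrame, of_apply, cons_val, Pi.add_apply,
    Pi.sub_apply, Pi.smul_apply, smul_eq_mul]
  linear_combination kerrτ φ p * h.pdx_pdx_add_pdy_pdy - 2 * h.G_mul_σ_sq_add_τ_sq -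
    4 * κ * h.conformalFactor_eq_sq_mul

theorem G_smul_frameDeriv_b₀ (h : IsKerrPoint κ φ p) :
    kerrG κ φ p • frameDeriv (kerrFrame φ) (kerrScalars κ φ).b₀ p =
      (2 * kerrσ φ p * kerrτ φ p) • frameDeriv (kerrFrame φ) (fun q => pdx φ (q 0, q 1)) p +
        (kerrτ φ p ^ 2 - kerrσ φ p ^ 2) •
          frameDeriv (kerrFrame φ) (fun q => pdy φ (q 0, q 1)) p +
        (2 * (pdx φ (p 0, p 1) * kerrτ φ p - pdy φ (p 0, p 1) * kerrσ φ p)) •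
          frameDeriv (kerrFrame φ) (kerrσ φ) p +
        (2 * (pdx φ (p 0, p 1) * kerrσ φ p + pdy φ (p 0, p 1) * kerrτ φ p)) •
          frameDeriv (kerrFrame φ) (kerrτ φ) p -
        (kerrScalars κ φ).b₀ p • frameDeriv (kerrFrame φ) (kerrG κ φ) p := by
  have hx := h.differentiableAt_pdx
  have hy := h.differentiableAt_pdy
  have hσ := h.differentiableAt_σ
  have hτ := h.differentiableAt_τ
  have hne := h.G_ne_zero
  simp only [kerrScalars]
  rw [frameDeriv_div (by fun_prop) h.differentiableAt_G hne]
  simp (disch := fun_prop) only [frameDeriv_add, frameDeriv_sub, frameDeriv_mul, frameDeriv_const,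
    frameDeriv_pow]
  ext a
  simp only [Pi.add_apply, Pi.sub_apply, Pi.smul_apply, smul_eq_mul, Pi.zero_apply]
  field_simp
  push_cast
  ring

theorem G_smul_frameDeriv_b₁ (h : IsKerrPoint κ φ p) :
    kerrG κ φ p • frameDeriv (kerrFrame φ) (kerrScalars κ φ).b₁ p =
      (2 * kerrσ φ p * kerrτ φ p) • frameDeriv (kerrFrame φ) (fun q => pdy φ (q 0, q 1)) p -
        (kerrτ φ p ^ 2 - kerrσ φ p ^ 2) •
          frameDeriv (kerrFrame φ) (fun q => pdx φ (q 0, q 1)) p +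
        (2 * (pdx φ (p 0, p 1) * kerrσ φ p + pdy φ (p 0, p 1) * kerrτ φ p)) •
          frameDeriv (kerrFrame φ) (kerrσ φ) p -
        (2 * (pdx φ (p 0, p 1) * kerrτ φ p - pdy φ (p 0, p 1) * kerrσ φ p)) •
          frameDeriv (kerrFrame φ) (kerrτ φ) p -
        (kerrScalars κ φ).b₁ p • frameDeriv (kerrFrame φ) (kerrG κ φ) p := by
  have hx := h.differentiableAt_pdx
  have hy := h.differentiableAt_pdy
  have hσ := h.differentiableAt_σ
  have hτ := h.differentiableAt_τ
  have hne := h.G_ne_zero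
  simp only [kerrScalars]
  rw [frameDeriv_div (by fun_prop) h.differentiableAt_G hne]
  simp (disch := fun_prop) only [frameDeriv_sub, frameDeriv_mul, frameDeriv_const,
    frameDeriv_pow]
  ext a
  simp only [Pi.add_apply, Pi.sub_apply, Pi.smul_apply, smul_eq_mul, Pi.zero_apply]
  field_simp
  push_cast
  ring

theorem frameDeriv_b₀_three (h : IsKerrPoint κ φ p) :
    frameDeriv (kerrFrame φ) (kerrScalars κ φ).b₀ p 3 =
      -2 * kerrτ φ p * (kerrScalars κ φ).b₁ p - 4 * kerrσ φ p * (kerrScalars κ φ).b₀ p := by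
  have hb := congrFun h.G_smul_frameDeriv_b₀ 3
  simp only [h.frameDeriv_pdx, h.frameDeriv_pdy, h.frameDeriv_σ, h.frameDeriv_τ, h.frameDeriv_G,
    cons_val, Pi.add_apply, Pi.sub_apply, Pi.smul_apply, smul_eq_mul] at hb
  refine mul_left_cancel₀ h.G_ne_zero ?_
  linear_combination hb + 2 * kerrσ φ p * h.G_mul_b₀ + 2 * kerrτ φ p * h.G_mul_b₁

theorem frameDeriv_b₁_three (h : IsKerrPoint κ φ p) :
    frameDeriv (kerrFrame φ) (kerrScalars κ φ).b₁ p 3 =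
      2 * kerrτ φ p * (kerrScalars κ φ).b₀ p - 4 * kerrσ φ p * (kerrScalars κ φ).b₁ p := by
  have hb := congrFun h.G_smul_frameDeriv_b₁ 3
  simp only [h.frameDeriv_pdx, h.frameDeriv_pdy, h.frameDeriv_σ, h.frameDeriv_τ, h.frameDeriv_G,
    cons_val, Pi.add_apply, Pi.sub_apply, Pi.smul_apply, smul_eq_mul] at hb
  refine mul_left_cancel₀ h.G_ne_zero ?_
  linear_combination hb + 2 * kerrσ φ p * h.G_mul_b₁ - 2 * kerrτ φ p * h.G_mul_b₀

theorem div_b (h : IsKerrPoint κ φ p) :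
    frameDeriv (kerrFrame φ) (kerrScalars κ φ).b₀ p 0 +
      frameDeriv (kerrFrame φ) (kerrScalars κ φ).b₁ p 1 =
        8 * kerrσ φ p * kerrτ φ p ^ 2 -
          2 * ((kerrScalars κ φ).a₀ p * (kerrScalars κ φ).b₀ p +
            (kerrScalars κ φ).a₁ p * (kerrScalars κ φ).b₁ p) := by
  have hb₀ := congrFun h.G_smul_frameDeriv_b₀ 0
  have hb₁ := congrFun h.G_smul_frameDeriv_b₁ 1
  simp only [h.frameDeriv_pdx, h.frameDeriv_pdy, h.frameDeriv_σ, h.frameDeriv_τ, h.frameDeriv_G,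
    cons_val, Pi.add_apply, Pi.sub_apply, Pi.smul_apply, smul_eq_mul] at hb₀ hb₁
  refine mul_left_cancel₀ h.G_ne_zero ?_
  linear_combination hb₀ + hb₁ + 2 * kerrσ φ p * kerrτ φ p * h.pdx_pdx_add_pdy_pdy

theorem bracket (h : IsKerrPoint κ φ p) (a b A : Fin 4) :
    frameDeriv (kerrFrame φ) (fun q => kerrFrame φ q A b) p a -
      frameDeriv (kerrFrame φ) (fun q => kerrFrame φ q A a) p b =
        (kerrScalars κ φ).bracketCoeff p a b * (kerrFrame φ p A 3 - kerrFrame φ p A 2) := by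
  have hlap := h.pdx_pdx_add_pdy_pdy
  fin_cases a <;> fin_cases b <;> fin_cases A <;>
    simp only [kerrFrame, kerrScalars, KerrScalars.bracketCoeff, of_apply, cons_val,
      Fin.reduceFinMk, Fin.zero_eta, Fin.isValue, Fin.mk_one, frameDeriv_const, frameDeriv_neg,
      h.frameDeriv_pdx, h.frameDeriv_pdy, Pi.neg_apply, Pi.zero_apply] <;>
    first
    | ring1
    | linear_combination hlap
    | linear_combination -hlap

theorem differentiableAt_scalars (h : IsKerrPoint κ φ p) :
    DifferentiableAt ℝ (kerrScalars κ φ).a₀ p ∧ DifferentiableAt ℝ (kerrScalars κ φ).a₁ p ∧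
      DifferentiableAt ℝ (kerrScalars κ φ).b₀ p ∧ DifferentiableAt ℝ (kerrScalars κ φ).b₁ p := by
  have hx := h.differentiableAt_pdx
  have hy := h.differentiableAt_pdy
  have hσ := h.differentiableAt_σ
  have hτ := h.differentiableAt_τ
  have hu := h.differentiableAt_conformalFactor
  refine ⟨?_, ?_, differentiableAt_div (by fun_prop) h.differentiableAt_G h.G_ne_zero,
    differentiableAt_div (by fun_prop) h.differentiableAt_G h.G_ne_zero⟩ <;>
    simp only [kerrScalars] <;> fun_prop

theorem frameDeriv_a₀_two (h : IsKerrPoint κ φ p) :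
    frameDeriv (kerrFrame φ) (kerrScalars κ φ).a₀ p 2 = 0 := by
  simp only [h.frameDeriv_a₀, h.frameDeriv_pdx, h.frameDeriv_pdy, h.frameDeriv_σ, h.frameDeriv_τ,
    h.frameDeriv_conformalFactor, kerrFrame, of_apply, cons_val, Pi.add_apply, Pi.sub_apply,
    Pi.smul_apply, smul_eq_mul]
  ring

theorem frameDeriv_a₁_two (h : IsKerrPoint κ φ p) :
    frameDeriv (kerrFrame φ) (kerrScalars κ φ).a₁ p 2 = 0 := by
  simp only [h.frameDeriv_a₁, h.frameDeriv_pdx, h.frameDeriv_pdy, h.frameDeriv_σ, h.frameDeriv_τ,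
    h.frameDeriv_conformalFactor, kerrFrame, of_apply, cons_val, Pi.add_apply, Pi.sub_apply,
    Pi.smul_apply, smul_eq_mul]
  ring

theorem frameDeriv_a₀_three (h : IsKerrPoint κ φ p) :
    frameDeriv (kerrFrame φ) (kerrScalars κ φ).a₀ p 3 =
      -(kerrG κ φ p * (kerrScalars κ φ).b₀ p) := by
  simp only [h.frameDeriv_a₀, h.frameDeriv_pdx, h.frameDeriv_pdy, h.frameDeriv_σ, h.frameDeriv_τ,
    h.frameDeriv_conformalFactor, h.G_mul_b₀, kerrFrame, of_apply, cons_val, Pi.add_apply,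
    Pi.sub_apply, Pi.smul_apply, smul_eq_mul]
  ring

theorem frameDeriv_a₁_three (h : IsKerrPoint κ φ p) :
    frameDeriv (kerrFrame φ) (kerrScalars κ φ).a₁ p 3 =
      -(kerrG κ φ p * (kerrScalars κ φ).b₁ p) := by
  simp only [h.frameDeriv_a₁, h.frameDeriv_pdx, h.frameDeriv_pdy, h.frameDeriv_σ, h.frameDeriv_τ,
    h.frameDeriv_conformalFactor, h.G_mul_b₁, kerrFrame, of_apply, cons_val, Pi.add_apply,
    Pi.sub_apply, Pi.smul_apply, smul_eq_mul]
  ring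

theorem contDiffAt_kerrFrame (h : IsKerrPoint κ φ p) (i j : Fin 4) :
    ContDiffAt ℝ 2 (fun q => kerrFrame φ q i j) p := by
  have hx := h.contDiffAt_pdx
  have hy := h.contDiffAt_pdy
  fin_cases i <;> fin_cases j <;> simp only [kerrFrame, of_apply, cons_val, Fin.reduceFinMk,
    Fin.zero_eta, Fin.isValue, Fin.mk_one] <;> fun_prop

theorem differentiableAt_kerrCoframe (h : IsKerrPoint κ φ p) :
    EntrywiseDifferentiableAt (kerrCoframe φ) p := by
  have hx := h.differentiableAt_pdx
  have hy := h.differentiableAt_pdy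
  intro i j
  fin_cases i <;> fin_cases j <;> simp only [kerrCoframe, of_apply, cons_val, Fin.reduceFinMk,
    Fin.zero_eta, Fin.isValue, Fin.mk_one] <;> fun_prop

end IsKerrPoint

theorem kerrScalars_structureEquations {κ : ℝ} {φ : ℝ × ℝ → ℝ} {U : Set (Fin 4 → ℝ)}
    (h : ∀ p ∈ U, IsKerrPoint κ φ p) :
    (kerrScalars κ φ).StructureEquations U (kerrFrame φ) where
  G_ne_zero p hp := (h p hp).G_ne_zero
  differentiableAt_G p hp := (h p hp).differentiableAt_G
  differentiableAt_σ p hp := (h p hp).differentiableAt_σ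
  differentiableAt_τ p hp := (h p hp).differentiableAt_τ
  differentiableAt_a₀ p hp := (h p hp).differentiableAt_scalars.1
  differentiableAt_a₁ p hp := (h p hp).differentiableAt_scalars.2.1
  differentiableAt_b₀ p hp := (h p hp).differentiableAt_scalars.2.2.1
  differentiableAt_b₁ p hp := (h p hp).differentiableAt_scalars.2.2.2
  frameDeriv_G p hp := (h p hp).frameDeriv_G
  frameDeriv_σ p hp := (h p hp).frameDeriv_σ
  frameDeriv_τ p hp := (h p hp).frameDeriv_τ
  frameDeriv_a₀_two p hp := (h p hp).frameDeriv_a₀_two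
  frameDeriv_a₁_two p hp := (h p hp).frameDeriv_a₁_two
  frameDeriv_a₀_three p hp := (h p hp).frameDeriv_a₀_three
  frameDeriv_a₁_three p hp := (h p hp).frameDeriv_a₁_three
  curl_a p hp := (h p hp).curl_a
  div_a p hp := (h p hp).div_a
  frameDeriv_b₀_three p hp := (h p hp).frameDeriv_b₀_three
  frameDeriv_b₁_three p hp := (h p hp).frameDeriv_b₁_three
  div_b p hp := (h p hp).div_b
  bracket p hp := (h p hp).bracket

/-- The metric of the Kerr family with curvature parameter `κ`, potential `φ` and mass
parameter `K = 𝐤 m`, expressed through the adapted coframe: its Gram matrix says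
`g = G (dx² + dy²) + θ ∨ (dv + dr - θ) + (1 + K σ) / 2 θ²`. -/
noncomputable def kerrMetric (κ : ℝ) (φ : ℝ × ℝ → ℝ) (K : ℝ) : MatrixField := fun p =>
  (kerrCoframe φ p)ᵀ * (kerrScalars κ φ).gram K p * kerrCoframe φ p

theorem kerrMetric_isLeviCivitaFrame {κ : ℝ} {φ : ℝ × ℝ → ℝ} {U : Set (Fin 4 → ℝ)}
    (hU : IsOpen U) (h : ∀ p ∈ U, IsKerrPoint κ φ p) (K : ℝ) :
    IsLeviCivitaFrame U (kerrMetric κ φ K) (kerrFrame φ) (kerrCoframe φ)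
      ((kerrScalars κ φ).gram K) ((kerrScalars κ φ).connection K) :=
  (kerrScalars_structureEquations h).isLeviCivitaFrame K hU
    (fun p hp => (h p hp).contDiffAt_kerrFrame) (fun p hp => (h p hp).differentiableAt_kerrCoframe)
    (fun p _ => kerrCoframe_mul_kerrFrame φ p) fun _ _ => rfl

theorem isOpen_kerr_domain {φ : ℝ × ℝ → ℝ} {V : Set (ℝ × ℝ)} (hV : IsOpen V)
    (hφ : ContinuousOn φ V) :
    IsOpen {p : Fin 4 → ℝ | (p 0, p 1) ∈ V ∧ kerrS φ p ≠ 0} := by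
  have hbase : Continuous fun p : Fin 4 → ℝ => (p 0, p 1) := by fun_prop
  have hS : ContinuousOn (kerrS φ) {p | (p 0, p 1) ∈ V} :=
    .add (by fun_prop) ((hφ.comp hbase.continuousOn fun _ hp => hp).pow 2)
  exact hS.isOpen_inter_preimage (hV.preimage hbase) isOpen_compl_singleton

theorem ricci_flat_of_kerr_family_general {κ : ℝ} (hκ : κ ≠ 0) {V : Set (ℝ × ℝ)}
    (hVopen : IsOpen V) (hV : ∀ p ∈ V, 1 + κ * (p.1 ^ 2 + p.2 ^ 2) ≠ 0)
    {φ : ℝ × ℝ → ℝ} (hφ : ContDiffOn ℝ 3 φ V)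
    (hpde : ∀ p ∈ V, lap φ p + 8 * κ * φ p / (1 + κ * (p.1 ^ 2 + p.2 ^ 2)) ^ 2 = 0)
    {m kc : ℝ} {θ ω : (Fin 4 → ℝ) → Fin 4 → ℝ}
    (hθ : ∀ p : Fin 4 → ℝ, θ p = ![-pdy φ (p 0, p 1), pdx φ (p 0, p 1), 1, 0])
    (hω : ∀ (p : Fin 4 → ℝ) (A : Fin 4),
      ω p A = (if A = 2 then (1 : ℝ) else 0) + (if A = 3 then (1 : ℝ) else 0) +
        (1 / 2) * (-1 + kc * m * p 3 / ((p 3) ^ 2 + (φ (p 0, p 1)) ^ 2)) * θ p A)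
    {g : MatrixField}
    (hg : ∀ (p : Fin 4 → ℝ) (A B : Fin 4),
      g p A B =
        (if A = B ∧ (A = 0 ∨ A = 1) then
          -(κ / 2) * ((p 3) ^ 2 + (φ (p 0, p 1)) ^ 2) *
            (4 / (1 + κ * ((p 0) ^ 2 + (p 1) ^ 2)) ^ 2)
        else 0) + (θ p A * ω p B + θ p B * ω p A) / 2)
    {p : Fin 4 → ℝ} (hp : (p 0, p 1) ∈ V) (hS : p 3 ^ 2 + φ (p 0, p 1) ^ 2 ≠ 0) :
    IsUnit (g p) ∧ ∀ A B : Fin 4, RicciT g A B p = 0 := by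
  obtain rfl : g = kerrMetric κ φ (kc * m) := by
    ext p A B
    fin_cases A <;> fin_cases B <;>
      simp only [hg, hω, hθ, kerrMetric, kerrCoframe, kerrScalars, KerrScalars.gram, kerrG, kerrσ,
        kerrS, conformalFactor, mul_apply, transpose_apply, of_apply, cons_val, Fin.sum_univ_four,
        Fin.zero_eta, Fin.mk_one, Fin.reduceFinMk, Fin.reduceEq, Fin.isValue, zero_ne_one,
        one_ne_zero, and_self, and_true, and_false, or_self, or_true, or_false, ↓reduceIte,
        one_div, inv_pow] <;>
      ring
  have hkerr (q : Fin 4 → ℝ) (hq : (q 0, q 1) ∈ V ∧ kerrS φ q ≠ 0) : IsKerrPoint κ φ q :=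
    ⟨hκ, hφ.contDiffAt (hVopen.mem_nhds hq.1), hV _ hq.1, hq.2, hpde _ hq.1⟩
  have hframe := kerrMetric_isLeviCivitaFrame (isOpen_kerr_domain hVopen hφ.continuousOn) hkerr
    (kc * m)
  exact ⟨hframe.isUnit_metric ⟨hp, hS⟩, hframe.ricciT_eq_zero ⟨hp, hS⟩
    ((kerrScalars_structureEquations hkerr).frameRicci_eq_zero _ ⟨hp, hS⟩)⟩

/-- Each metric of the Kerr family (6.1)/(1.7), written in the coordinates `(x, y, v, r)`,
is a genuine (pseudo-Riemannian) coordinate metric and is Ricci flat. -/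
theorem ricci_flat_of_kerr_family
    (κ : ℝ) (hκ : κ = 1 ∨ κ = -1)
    (V : Set (ℝ × ℝ)) (hVopen : IsOpen V)
    (hVdisk : κ = -1 → V ⊆ {p : ℝ × ℝ | p.1 ^ 2 + p.2 ^ 2 < 1})
    (φ : ℝ × ℝ → ℝ) (hφ : ContDiffOn ℝ (⊤ : ℕ∞) φ V)
    (hsign : ∀ p ∈ V, κ * φ p < 0)
    (hpde : ∀ p ∈ V, lap φ p + 8 * κ * φ p / (1 + κ * (p.1 ^ 2 + p.2 ^ 2)) ^ 2 = 0)
    (m kc : ℝ)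
    (θ ω : (Fin 4 → ℝ) → Fin 4 → ℝ)
    (hθ : ∀ p : Fin 4 → ℝ,
      θ p = ![-pdy φ (p 0, p 1), pdx φ (p 0, p 1), 1, 0])
    (hω : ∀ (p : Fin 4 → ℝ) (A : Fin 4),
      ω p A = (if A = 2 then (1 : ℝ) else 0) + (if A = 3 then (1 : ℝ) else 0) +
        (1 / 2) * (-1 + kc * m * p 3 / ((p 3) ^ 2 + (φ (p 0, p 1)) ^ 2)) * θ p A)
    (g : (Fin 4 → ℝ) → Matrix (Fin 4) (Fin 4) ℝ)
    (hg : ∀ (p : Fin 4 → ℝ) (A B : Fin 4),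
      g p A B =
        (if A = B ∧ (A = 0 ∨ A = 1) then
          -(κ / 2) * ((p 3) ^ 2 + (φ (p 0, p 1)) ^ 2) *
            (4 / (1 + κ * ((p 0) ^ 2 + (p 1) ^ 2)) ^ 2)
        else 0) + (θ p A * ω p B + θ p B * ω p A) / 2) :
    ∀ p : Fin 4 → ℝ, (p 0, p 1) ∈ V →
      IsUnit (g p) ∧ ∀ A B : Fin 4, RicciT g A B p = 0 := by
  intro p hp
  have hκ₀ : κ ≠ 0 := by rcases hκ with rfl | rfl <;> norm_num
  have hV : ∀ q ∈ V, 1 + κ * (q.1 ^ 2 + q.2 ^ 2) ≠ 0 := fun q hq => by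
    rcases hκ with rfl | rfl
    · positivity
    · have hdisk : q.1 ^ 2 + q.2 ^ 2 < 1 := hVdisk rfl hq
      linarith
  have hφ₀ : φ (p 0, p 1) ≠ 0 := right_ne_zero_of_mul (hsign _ hp).ne
  exact ricci_flat_of_kerr_family_general hκ₀ hVopen hV (hφ.of_le (by norm_cast)) hpde hθ hω hg hp
    (by positivity)
end

section
/- Let V ⊆ ℝ² be a bounded open set whose closure is contained in 𝔻, and let φ be a real-valued function that is continuous on the closure of V, twice differentiable on V, and satisfies Δφ = 8·φ/(1 − x² − y²)² at every point of V. If φ ≥ 0 at every point of the topological frontier of V, then φ ≥ 0 on the closure of V; and if moreover V is connected and φ is strictly positive at some point of the frontier of V, then φ > 0 at every point of V. -/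
/-!
Nonnegativity: for `ε > 0` and large `B`, the function `g = ε (exp ‖x‖² - B)` is negative with
positive Laplacian, so `f - g` has no nonpositive interior minimum. Hence `f > g` for every `ε > 0`.

Positivity is Hopf's argument, applied to a function `f ≥ 0` with `Δf ≤ C f`. If `f` vanishes at
`p` but not at some `q` close to `p`, let `z` be the zero of `f` nearest to `q`. The closed ball
with diameter `[q, z]`, of centre `a` and radius `r`, meets the zero set of `f` only at `z`. For
large `α` the barrier `w = exp (-α |x - a|²) - exp (-α r²)` satisfies `Δw > C w` near `z`, and
`ε w < f` on a small sphere about `z` once `ε` is small, because `w < 0` outside the ball.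
Comparison gives `f z > ε w z = 0`, a contradiction. So the zero set of `f` is open as well as
closed.
-/

open Filter Metric Module Set Topology

section SecondOrderConditions

theorem deriv_deriv_nonneg_of_isLocalMin {f : ℝ → ℝ} {x : ℝ} (hf : ContinuousAt f x)
    (hmin : IsLocalMin f x) : 0 ≤ deriv (deriv f) x := by
  by_contra! hneg
  have hmax : IsLocalMax f x := isLocalMax_of_deriv_deriv_neg hneg hmin.deriv_eq_zero hf
  have hconst : f =ᶠ[𝓝 x] fun _ ↦ f x := by
    filter_upwards [hmin, hmax] with y hy hy' using le_antisymm hy' hy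
  have hzero : deriv (deriv f) x = 0 := by simp [hconst.deriv.deriv_eq]
  exact hneg.ne hzero

theorem fderiv_fderiv_apply_nonneg_of_isLocalMin {E : Type*} [NormedAddCommGroup E]
    [NormedSpace ℝ E] {f : E → ℝ} {x v : E} (hf : ∀ᶠ y in 𝓝 x, DifferentiableAt ℝ f y)
    (hf' : DifferentiableAt ℝ (fun y ↦ fderiv ℝ f y v) x) (hmin : IsLocalMin f x) :
    0 ≤ fderiv ℝ (fun y ↦ fderiv ℝ f y v) x v := by
  have hline (t : ℝ) : HasDerivAt (fun t : ℝ ↦ x + t • v) v t := by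
    simpa using ((hasDerivAt_id t).smul_const v).const_add x
  have htendsto : Tendsto (fun t : ℝ ↦ x + t • v) (𝓝 0) (𝓝 x) := by
    simpa using (hline 0).continuousAt.tendsto
  have hderiv : deriv (fun t : ℝ ↦ f (x + t • v)) =ᶠ[𝓝 0] fun t ↦ fderiv ℝ f (x + t • v) v := by
    filter_upwards [htendsto.eventually hf] with t ht
    exact (ht.hasFDerivAt.comp_hasDerivAt t (hline t)).deriv
  have hderiv₂ : deriv (deriv fun t : ℝ ↦ f (x + t • v)) 0 =
      fderiv ℝ (fun y ↦ fderiv ℝ f y v) x v := by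
    rw [hderiv.deriv_eq]
    exact (hf'.hasFDerivAt.comp_hasDerivAt_of_eq 0 (hline 0) (by simp)).deriv
  rw [← hderiv₂]
  refine deriv_deriv_nonneg_of_isLocalMin ?_ ?_
  · exact ContinuousAt.comp_of_eq hf.self_of_nhds.continuousAt (hline 0).continuousAt (by simp)
  · simpa [IsLocalMin, IsMinFilter] using htendsto.eventually hmin

end SecondOrderConditions

variable {ι E : Type*} [Fintype ι] [NormedAddCommGroup E] [NormedSpace ℝ E]

/-- The operator `∑ i, ∂²/∂(b i)²`, that is, the Laplacian of the Euclidean structure for which the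
basis `b` is orthonormal. No inner product on `E` is required, so that it applies to `ℝ × ℝ`, which
carries the supremum norm. -/
noncomputable def basisLaplacian (b : Basis ι ℝ E) (f : E → ℝ) (x : E) : ℝ :=
  ∑ i, fderiv ℝ (fun y ↦ fderiv ℝ f y (b i)) x (b i)

/-- The coordinates in the basis `b`, valued in Euclidean space: they transport to `E` the Euclidean
distance adapted to `basisLaplacian b`. -/
noncomputable def euclideanCoords (b : Basis ι ℝ E) : E ≃L[ℝ] EuclideanSpace ℝ ι :=
  b.equivFunL.trans (EuclideanSpace.equiv ι ℝ).symm

theorem basisLaplacian_finTwoProd (f : ℝ × ℝ → ℝ) :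
    basisLaplacian (Basis.finTwoProd ℝ) f = lap f := by
  ext p
  simp only [basisLaplacian, Fin.sum_univ_two, Basis.finTwoProd_zero, Basis.finTwoProd_one]
  rfl

section Laplacian

variable (b : Basis ι ℝ E)

theorem basisLaplacian_const_mul (ε : ℝ) (f : E → ℝ) (x : E) :
    basisLaplacian b (fun y ↦ ε * f y) x = ε * basisLaplacian b f x := by
  have hmul (g : E → ℝ) (x v : E) : fderiv ℝ (fun y ↦ ε * g y) x v = ε * fderiv ℝ g x v := by
    change fderiv ℝ (ε • g) x v = _
    rw [fderiv_const_smul_field, Pi.smul_apply, smul_apply, smul_eq_mul]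
  simp only [basisLaplacian, hmul, Finset.mul_sum]

theorem basisLaplacian_sub_const (k : ℝ) (f : E → ℝ) (x : E) :
    basisLaplacian b (fun y ↦ f y - k) x = basisLaplacian b f x := by
  simp only [basisLaplacian, fderiv_sub_const]

theorem euclideanCoords_basis_eq_single [DecidableEq ι] (i : ι) :
    euclideanCoords b (b i) = EuclideanSpace.single i 1 := by
  ext j
  simp [euclideanCoords, Finsupp.single_apply, eq_comm]

theorem fderiv_exp_mul_norm_sq_apply {F : Type*} [NormedAddCommGroup F] [InnerProductSpace ℝ F]
    (T : E →L[ℝ] F) (α : ℝ) (a : F) (x v : E) :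
    fderiv ℝ (fun y ↦ Real.exp (α * ‖T y - a‖ ^ 2)) x v =
      2 * α * inner ℝ (T x - a) (T v) * Real.exp (α * ‖T x - a‖ ^ 2) := by
  have h := (((T.hasFDerivAt (x := x)).sub_const a).norm_sq.const_mul α).exp
  rw [h.fderiv]
  simp only [smul_apply, ContinuousLinearMap.comp_apply, coe_innerSL_apply, nsmul_eq_mul,
    Nat.cast_ofNat, smul_eq_mul]
  ring

theorem fderiv_fderiv_exp_mul_norm_sq_apply {F : Type*} [NormedAddCommGroup F]
    [InnerProductSpace ℝ F] (T : E →L[ℝ] F) (α : ℝ) (a : F) (x v : E) :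
    fderiv ℝ (fun y ↦ fderiv ℝ (fun y ↦ Real.exp (α * ‖T y - a‖ ^ 2)) y v) x v =
      (4 * α ^ 2 * inner ℝ (T x - a) (T v) ^ 2 + 2 * α * ‖T v‖ ^ 2) *
        Real.exp (α * ‖T x - a‖ ^ 2) := by
  simp only [fderiv_exp_mul_norm_sq_apply]
  have hT := (T.hasFDerivAt (x := x)).sub_const a
  have h := ((hT.inner ℝ (hasFDerivAt_const (T v) x)).const_mul (2 * α)).mul
    (hT.norm_sq.const_mul α).exp
  refine (DFunLike.congr_fun h.fderiv v).trans ?_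
  simp only [add_apply, smul_apply, ContinuousLinearMap.comp_apply, coe_innerSL_apply, nsmul_eq_mul,
    Nat.cast_ofNat, smul_eq_mul, ContinuousLinearMap.prod_apply, zero_apply, fderivInnerCLM_apply,
    inner_zero_right, inner_self_eq_norm_sq_to_K, Real.ringHom_apply, zero_add]
  ring

theorem basisLaplacian_exp_mul_norm_sq (α : ℝ) (a : EuclideanSpace ℝ ι) (x : E) :
    basisLaplacian b (fun y ↦ Real.exp (α * ‖euclideanCoords b y - a‖ ^ 2)) x =
      (4 * α ^ 2 * ‖euclideanCoords b x - a‖ ^ 2 + 2 * α * Fintype.card ι) *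
        Real.exp (α * ‖euclideanCoords b x - a‖ ^ 2) := by
  classical
  have hterm (i : ι) := fderiv_fderiv_exp_mul_norm_sq_apply
    (euclideanCoords b : E →L[ℝ] EuclideanSpace ℝ ι) α a x (b i)
  simp only [ContinuousLinearEquiv.coe_coe, euclideanCoords_basis_eq_single,
    EuclideanSpace.inner_single_right, PiLp.norm_single] at hterm
  simp only [basisLaplacian, hterm, ← Finset.sum_mul, Finset.sum_add_distrib,
    EuclideanSpace.real_norm_sq_eq (euclideanCoords b x - a), Finset.mul_sum]
  simp [mul_comm, mul_left_comm]

theorem contDiff_exp_mul_norm_sq (α : ℝ) (a : EuclideanSpace ℝ ι) :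
    ContDiff ℝ 2 fun y ↦ Real.exp (α * ‖euclideanCoords b y - a‖ ^ 2) := by
  have h : ContDiff ℝ 2 fun y ↦ euclideanCoords b y - a :=
    (euclideanCoords b).contDiff.sub contDiff_const
  exact ((h.norm_sq ℝ).const_smul α).exp

end Laplacian

section MaximumPrinciple

variable {b : Basis ι ℝ E} {V : Set E} {f : E → ℝ}

theorem basisLaplacian_le_of_isLocalMin_sub {g : E → ℝ} {x : E}
    (hf : ∀ᶠ y in 𝓝 x, DifferentiableAt ℝ f y)
    (hf' : ∀ i, DifferentiableAt ℝ (fun y ↦ fderiv ℝ f y (b i)) x)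
    (hg : ContDiffAt ℝ 2 g x) (hmin : IsLocalMin (fun y ↦ f y - g y) x) :
    basisLaplacian b g x ≤ basisLaplacian b f x := by
  refine Finset.sum_le_sum fun i _ ↦ ?_
  have hg₁ : ∀ᶠ y in 𝓝 x, DifferentiableAt ℝ g y :=
    (hg.eventually (by simp)).mono fun y hy ↦ hy.differentiableAt (by norm_num)
  have hg₂ : DifferentiableAt ℝ (fun y ↦ fderiv ℝ g y (b i)) x :=
    ((hg.fderiv_right (m := 1) (by norm_num)).differentiableAt (by norm_num)).clm_apply
      (differentiableAt_const _)
  have hsub : (fun y ↦ fderiv ℝ (fun y ↦ f y - g y) y (b i)) =ᶠ[𝓝 x]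
      fun y ↦ fderiv ℝ f y (b i) - fderiv ℝ g y (b i) := by
    filter_upwards [hf, hg₁] with y hfy hgy
    rw [fderiv_fun_sub hfy hgy, sub_apply]
  have hnonneg := fderiv_fderiv_apply_nonneg_of_isLocalMin (v := b i)
    (hf.and hg₁ |>.mono fun y hy ↦ hy.1.fun_sub hy.2)
    (hsub.differentiableAt_iff.2 ((hf' i).fun_sub hg₂)) hmin
  rw [hsub.fderiv_eq, fderiv_fun_sub (hf' i) hg₂, sub_apply] at hnonneg
  exact sub_nonneg.1 hnonneg

theorem lt_of_basisLaplacian_lt {g : E → ℝ} (hV : IsOpen V) (hVc : IsCompact (closure V))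
    (hfc : ContinuousOn f (closure V)) (hf : DifferentiableOn ℝ f V)
    (hf' : ∀ i, DifferentiableOn ℝ (fun y ↦ fderiv ℝ f y (b i)) V)
    (hgc : ContinuousOn g (closure V)) (hg : ContDiffOn ℝ 2 g V)
    (hlap : ∀ x ∈ V, f x ≤ g x → basisLaplacian b f x < basisLaplacian b g x)
    (hbd : ∀ x ∈ frontier V, g x < f x) : ∀ x ∈ closure V, g x < f x := by
  intro x hx
  obtain ⟨m, hm, hmin⟩ := hVc.exists_isMinOn ⟨x, hx⟩ (hfc.sub hgc)
  suffices hgm : g m < f m from sub_pos.1 ((sub_pos.2 hgm).trans_le (hmin hx))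
  by_contra! hfg
  have hmV : m ∈ V := by
    by_contra hmV
    exact (hbd m (hV.frontier_eq ▸ ⟨hm, hmV⟩)).not_ge hfg
  have hVm : V ∈ 𝓝 m := hV.mem_nhds hmV
  refine (hlap m hmV hfg).not_ge
    (basisLaplacian_le_of_isLocalMin_sub ?_ ?_ (hg.contDiffAt hVm) ?_)
  · filter_upwards [hV.eventually_mem hmV] with y hy using hf.differentiableAt (hV.mem_nhds hy)
  · exact fun i ↦ (hf' i).differentiableAt hVm
  · exact hmin.isLocalMin (mem_of_superset hVm subset_closure)

theorem nonneg_of_basisLaplacian_nonpos [Nonempty ι] (hV : IsOpen V) (hVc : IsCompact (closure V))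
    (hfc : ContinuousOn f (closure V)) (hf : DifferentiableOn ℝ f V)
    (hf' : ∀ i, DifferentiableOn ℝ (fun y ↦ fderiv ℝ f y (b i)) V)
    (hlap : ∀ x ∈ V, f x < 0 → basisLaplacian b f x ≤ 0)
    (hbd : ∀ x ∈ frontier V, 0 ≤ f x) : ∀ x ∈ closure V, 0 ≤ f x := by
  set h : E → ℝ := fun y ↦ Real.exp (1 * ‖euclideanCoords b y - 0‖ ^ 2) with h_def
  have hh : ContDiff ℝ 2 h := contDiff_exp_mul_norm_sq b 1 0
  have hlap_pos (x : E) : 0 < basisLaplacian b h x := by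
    rw [h_def, basisLaplacian_exp_mul_norm_sq]
    positivity
  obtain ⟨B, hB⟩ : ∃ B, ∀ x ∈ closure V, h x < B := by
    obtain ⟨B, hB⟩ := hVc.bddAbove_image hh.continuous.continuousOn
    exact ⟨B + 1, fun x hx ↦ (hB (mem_image_of_mem h hx)).trans_lt (lt_add_one B)⟩
  have hlt {ε : ℝ} (hε : 0 < ε) : ∀ x ∈ closure V, ε * (h x - B) < f x := by
    have hneg (x) (hx : x ∈ closure V) : ε * (h x - B) < 0 :=
      mul_neg_of_pos_of_neg hε (sub_neg.2 (hB x hx))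
    have hg : ContDiff ℝ 2 fun x ↦ ε * (h x - B) := contDiff_const.mul (hh.sub contDiff_const)
    refine lt_of_basisLaplacian_lt hV hVc hfc hf hf' hg.continuous.continuousOn hg.contDiffOn ?_
      fun x hx ↦ (hneg x (frontier_subset_closure hx)).trans_le (hbd x hx)
    intro x hx hfx
    rw [basisLaplacian_const_mul, basisLaplacian_sub_const]
    exact (hlap x hx (hfx.trans_lt (hneg x (subset_closure hx)))).trans_lt
      (mul_pos hε (hlap_pos x))
  intro x hx
  by_contra! hfx
  have hBx : h x - B < 0 := sub_neg.2 (hB x hx)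
  -- At `x` the comparison with `ε = f x / (h x - B)` would read `f x < f x`.
  exact (hlt (div_pos_of_neg_of_neg hfx hBx) x hx).ne (div_mul_cancel₀ (f x) hBx.ne)

theorem exists_hopf_barrier (b : Basis ι ℝ E) {a : EuclideanSpace ℝ ι} {z : E}
    (hza : euclideanCoords b z ≠ a) (C : ℝ) :
    ∃ w : E → ℝ, ContDiff ℝ 2 w ∧ w z = 0 ∧
      (∀ x, 0 ≤ w x → dist (euclideanCoords b x) a ≤ dist (euclideanCoords b z) a) ∧
      ∀ᶠ x in 𝓝 z, C * w x < basisLaplacian b w x := by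
  set T := euclideanCoords b
  have hr : 0 < ‖T z - a‖ := norm_pos_iff.2 (sub_ne_zero.2 hza)
  -- Any `α > n / (2r²)` makes the Laplacian of the barrier positive at `z`.
  set α := Fintype.card ι / ‖T z - a‖ ^ 2 + 1 with hα_def
  have hα : 0 < α := by positivity
  have hαr : α * ‖T z - a‖ ^ 2 = Fintype.card ι + ‖T z - a‖ ^ 2 := by
    rw [hα_def]
    field_simp
  set k := Real.exp (-α * ‖T z - a‖ ^ 2)
  let w : E → ℝ := fun x ↦ Real.exp (-α * ‖T x - a‖ ^ 2) - k
  have hw : ContDiff ℝ 2 w := (contDiff_exp_mul_norm_sq b (-α) a).sub contDiff_const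
  have hlap (x : E) : basisLaplacian b w x =
      (4 * (-α) ^ 2 * ‖T x - a‖ ^ 2 + 2 * (-α) * Fintype.card ι) *
        Real.exp (-α * ‖T x - a‖ ^ 2) := by
    rw [basisLaplacian_sub_const, basisLaplacian_exp_mul_norm_sq]
  have hwz : w z = 0 := by simp [w, k]
  refine ⟨w, hw, hwz, fun x hx ↦ ?_, ?_⟩
  · simp only [w, k, sub_nonneg, Real.exp_le_exp, neg_mul, neg_le_neg_iff] at hx
    rw [dist_eq_norm, dist_eq_norm]
    exact (sq_le_sq₀ (norm_nonneg _) (norm_nonneg _)).1 (le_of_mul_le_mul_left hx hα)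
  · have hT : Continuous T := T.continuous
    have hcont : Continuous (basisLaplacian b w) := by
      rw [funext hlap]
      fun_prop
    refine (hw.continuous.const_mul C).continuousAt.eventually_lt hcont.continuousAt ?_
    have hfactor : 4 * (-α) ^ 2 * ‖T z - a‖ ^ 2 + 2 * (-α) * Fintype.card ι =
        2 * α * (Fintype.card ι + 2 * ‖T z - a‖ ^ 2) := by
      linear_combination 4 * α * hαr
    rw [hwz, mul_zero, hlap, hfactor]
    positivity

theorem exists_pos_forall_mul_lt {X : Type*} [TopologicalSpace X] {K : Set X} {f w : X → ℝ}
    (hK : IsCompact K) (hf : ContinuousOn f K) (hw : Continuous w) (hf0 : ∀ x ∈ K, 0 ≤ f x)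
    (hpos : ∀ x ∈ K, 0 ≤ w x → 0 < f x) : ∃ ε > 0, ∀ x ∈ K, ε * w x < f x := by
  have hK' : IsCompact (K ∩ {x | 0 ≤ w x}) :=
    hK.inter_right (isClosed_le continuous_const hw)
  obtain ⟨M, hM⟩ : BddAbove ((fun x ↦ w x / f x) '' (K ∩ {x | 0 ≤ w x})) :=
    hK'.bddAbove_image (hw.continuousOn.div (hf.mono inter_subset_left)
      fun x hx ↦ (hpos x hx.1 hx.2).ne')
  refine ⟨(|M| + 1)⁻¹, by positivity, fun x hx ↦ ?_⟩
  rcases lt_or_ge (w x) 0 with hwx | hwx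
  · exact (mul_neg_of_pos_of_neg (by positivity) hwx).trans_le (hf0 x hx)
  · have hfx : 0 < f x := hpos x hx hwx
    have hquot : w x / f x < |M| + 1 := calc
      w x / f x ≤ M := hM (mem_image_of_mem _ ⟨hx, hwx⟩)
      _ ≤ |M| := le_abs_self M
      _ < |M| + 1 := lt_add_one _
    rwa [inv_mul_lt_iff₀ (by positivity), ← div_lt_iff₀ hfx]

theorem pos_of_forall_pos_of_dist_le {z : E} {a : EuclideanSpace ℝ ι} {C : ℝ} (hV : IsOpen V)
    (hz : z ∈ V) (hf : DifferentiableOn ℝ f V)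
    (hf' : ∀ i, DifferentiableOn ℝ (fun y ↦ fderiv ℝ f y (b i)) V) (hf0 : ∀ x ∈ V, 0 ≤ f x)
    (hlap : ∀ᶠ x in 𝓝 z, basisLaplacian b f x ≤ C * f x) (hza : euclideanCoords b z ≠ a)
    (hpos : ∀ x ∈ V, x ≠ z →
      dist (euclideanCoords b x) a ≤ dist (euclideanCoords b z) a → 0 < f x) :
    0 < f z := by
  have := b.finiteDimensional_of_finite
  have : ProperSpace E := FiniteDimensional.proper_real E
  obtain ⟨w, hw, hwz, hw_nonneg, hlapw⟩ := exists_hopf_barrier b hza (max C 0)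
  obtain ⟨δ, hδ, hball⟩ := nhds_basis_closedBall.eventually_iff.1
    ((hV.eventually_mem hz).and (hlap.and hlapw))
  have hballV : closedBall z δ ⊆ V := fun x hx ↦ (hball hx).1
  have hclosure : closure (ball z δ) = closedBall z δ := closure_ball z hδ.ne'
  have hfrontier : frontier (ball z δ) = sphere z δ := frontier_ball z hδ.ne'
  obtain ⟨ε, hε, hεw⟩ : ∃ ε > 0, ∀ x ∈ sphere z δ, ε * w x < f x := by
    have hsphere : sphere z δ ⊆ V := sphere_subset_closedBall.trans hballV
    refine exists_pos_forall_mul_lt (isCompact_sphere z δ) (hf.continuousOn.mono hsphere)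
      hw.continuous (fun x hx ↦ hf0 x (hsphere hx)) fun x hx hwx ↦ ?_
    exact hpos x (hsphere hx) (ne_of_mem_sphere hx hδ.ne') (hw_nonneg x hwx)
  have hlt : ∀ x ∈ closure (ball z δ), ε * w x < f x := by
    have hballV' : ball z δ ⊆ V := ball_subset_closedBall.trans hballV
    have hg : ContDiff ℝ 2 fun x ↦ ε * w x := contDiff_const.mul hw
    refine lt_of_basisLaplacian_lt (b := b) isOpen_ball (hclosure ▸ isCompact_closedBall z δ)
      (hclosure ▸ hf.continuousOn.mono hballV) (hf.mono hballV')
      (fun i ↦ (hf' i).mono hballV') hg.continuous.continuousOn hg.contDiffOn ?_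
      (hfrontier ▸ hεw)
    intro x hx hfx
    obtain ⟨hxV, hlapx, hlapwx⟩ := hball (ball_subset_closedBall hx)
    rw [basisLaplacian_const_mul]
    calc basisLaplacian b f x ≤ C * f x := hlapx
      _ ≤ max C 0 * f x := mul_le_mul_of_nonneg_right (le_max_left C 0) (hf0 x hxV)
      _ ≤ max C 0 * (ε * w x) := mul_le_mul_of_nonneg_left hfx (le_max_right C 0)
      _ = ε * (max C 0 * w x) := by ring
      _ < ε * basisLaplacian b w x := mul_lt_mul_of_pos_left hlapwx hε
  simpa [hwz] using hlt z (subset_closure (mem_ball_self hδ))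

theorem dist_lt_of_dist_midpoint_le {F : Type*} [NormedAddCommGroup F] [InnerProductSpace ℝ F]
    {q x z : F} (hxz : x ≠ z) (hx : dist x (midpoint ℝ q z) ≤ dist z (midpoint ℝ q z)) :
    dist x q < dist z q := by
  set o := midpoint ℝ q z
  have ho : o - q = z - o :=
    (midpoint_vsub_left (R := ℝ) q z).trans (right_vsub_midpoint (R := ℝ) q z).symm
  have hxq : (x - o) + (z - o) = x - q := by rw [← ho, sub_add_sub_cancel]
  have hzq : ‖z - q‖ = 2 * ‖z - o‖ := by
    rw [← sub_add_sub_cancel z o q, ho, ← two_smul ℝ, norm_smul, Real.norm_ofNat]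
  have hpar := parallelogram_law_with_norm ℝ (x - o) (z - o)
  rw [hxq, sub_sub_sub_cancel_right] at hpar
  rw [dist_eq_norm, dist_eq_norm] at hx ⊢
  have hsep : 0 < ‖x - z‖ := norm_pos_iff.2 (sub_ne_zero.2 hxz)
  refine lt_of_pow_lt_pow_left₀ 2 (norm_nonneg _) ?_
  rw [hzq]
  nlinarith [norm_nonneg (x - o)]

theorem exists_nearest_preimage {X Y F : Type*} [TopologicalSpace X] [TopologicalSpace Y]
    [T1Space Y] [PseudoMetricSpace F] [ProperSpace F] (T : X ≃ₜ F) {V : Set X} {f : X → Y} {p : X}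
    (hV : IsOpen V) (hp : p ∈ V) (hf : ContinuousOn f V) :
    ∀ᶠ q in 𝓝 p, ∃ z ∈ V, f z = f p ∧
      ∀ x ∈ V, f x = f p → dist (T z) (T q) ≤ dist (T x) (T q) := by
  have hbasis : (𝓝 p).HasBasis (0 < ·) fun ρ ↦ T ⁻¹' closedBall (T p) ρ := by
    rw [T.nhds_eq_comap]
    exact nhds_basis_closedBall.comap T
  obtain ⟨ρ, hρ, hρV⟩ := hbasis.mem_iff.1 (hV.mem_nhds hp)
  have hfiber : IsCompact (T ⁻¹' closedBall (T p) ρ ∩ f ⁻¹' {f p}) :=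
    (T.isCompact_preimage.2 (isCompact_closedBall _ _)).of_isClosed_subset
      ((hf.mono hρV).preimage_isClosed_of_isClosed (isClosed_closedBall.preimage T.continuous)
        isClosed_singleton) inter_subset_left
  have hpfiber : p ∈ T ⁻¹' closedBall (T p) ρ ∩ f ⁻¹' {f p} := ⟨mem_closedBall_self hρ.le, rfl⟩
  filter_upwards [hbasis.mem_of_mem (half_pos hρ)] with q hq
  obtain ⟨z, hz, hzmin⟩ := hfiber.exists_isMinOn ⟨p, hpfiber⟩
    (f := fun x ↦ dist (T x) (T q)) (T.continuous.dist continuous_const).continuousOn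
  refine ⟨z, hρV hz.1, hz.2, fun x _ hfx ↦ ?_⟩
  by_contra! hx
  have hxρ : dist (T x) (T p) ≤ ρ := calc
    dist (T x) (T p) ≤ dist (T x) (T q) + dist (T q) (T p) := dist_triangle _ _ _
    _ ≤ dist (T p) (T q) + dist (T q) (T p) := by gcongr; exact hx.le.trans (hzmin hpfiber)
    _ = 2 * dist (T q) (T p) := by rw [dist_comm (T p)]; ring
    _ ≤ ρ := by linarith [mem_closedBall.1 hq]
  exact (hzmin ⟨hxρ, hfx⟩).not_gt hx

theorem eventually_eq_zero_of_basisLaplacian_le {p : E} (hV : IsOpen V) (hp : p ∈ V)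
    (hf : DifferentiableOn ℝ f V)
    (hf' : ∀ i, DifferentiableOn ℝ (fun y ↦ fderiv ℝ f y (b i)) V) (hf0 : ∀ x ∈ V, 0 ≤ f x)
    (hlap : ∀ x ∈ V, ∃ C, ∀ᶠ y in 𝓝 x, basisLaplacian b f y ≤ C * f y) (hfp : f p = 0) :
    ∀ᶠ q in 𝓝 p, f q = 0 := by
  set T := euclideanCoords b
  filter_upwards [exists_nearest_preimage T.toHomeomorph hV hp hf.continuousOn] with
    q ⟨z, hzV, hfz, hnearest⟩
  rw [hfp] at hfz hnearest
  by_contra hfq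
  have hzq : T z ≠ midpoint ℝ (T q) (T z) := fun h ↦
    hfq (T.injective ((midpoint_eq_right_iff ℝ).1 h.symm) ▸ hfz)
  obtain ⟨C, hC⟩ := hlap z hzV
  refine (pos_of_forall_pos_of_dist_le hV hzV hf hf' hf0 hC hzq fun x hxV hxz hx ↦ ?_).ne' hfz
  have hdist : dist (T x) (T q) < dist (T z) (T q) :=
    dist_lt_of_dist_midpoint_le (T.injective.ne hxz) hx
  exact (hf0 x hxV).lt_of_ne' fun hfx ↦ (hnearest x hxV hfx).not_gt hdist

theorem eqOn_zero_of_basisLaplacian_le {p : E} (hV : IsOpen V) (hVc : IsPreconnected V)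
    (hf : DifferentiableOn ℝ f V)
    (hf' : ∀ i, DifferentiableOn ℝ (fun y ↦ fderiv ℝ f y (b i)) V) (hf0 : ∀ x ∈ V, 0 ≤ f x)
    (hlap : ∀ x ∈ V, ∃ C, ∀ᶠ y in 𝓝 x, basisLaplacian b f y ≤ C * f y) (hp : p ∈ V)
    (hfp : f p = 0) : EqOn f 0 V := by
  have hopen : IsOpen {x | x ∈ V ∧ f x = 0} := isOpen_iff_mem_nhds.2 fun x hx ↦
    (hV.eventually_mem hx.1).and
      (eventually_eq_zero_of_basisLaplacian_le hV hx.1 hf hf' hf0 hlap hx.2)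
  have hclosed : closure {x | x ∈ V ∧ f x = 0} ∩ V ⊆ {x | x ∈ V ∧ f x = 0} := by
    rintro x ⟨hx, hxV⟩
    have hmaps : MapsTo f {x | x ∈ V ∧ f x = 0} {0} := fun y hy ↦ hy.2
    have hcont : ContinuousAt f x := hf.continuousOn.continuousAt (hV.mem_nhds hxV)
    have hfx : f x ∈ closure {0} := hcont.continuousWithinAt.mem_closure hx hmaps
    exact ⟨hxV, by simpa using hfx⟩
  exact fun x hx ↦ (hVc.subset_of_closure_inter_subset hopen ⟨p, hp, hp, hfp⟩ hclosed hx).2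

theorem maximum_principle_kappa_neg_one_general [Nonempty ι] {c : E → ℝ} (hVo : IsOpen V)
    (hVb : Bornology.IsBounded V) (hfc : ContinuousOn f (closure V)) (hf : DifferentiableOn ℝ f V)
    (hf' : ∀ i, DifferentiableOn ℝ (fun y ↦ fderiv ℝ f y (b i)) V)
    (hc0 : ∀ x ∈ V, 0 ≤ c x) (hc : ∀ x ∈ V, (𝓝 x).IsBoundedUnder (· ≤ ·) c)
    (hlap : ∀ x ∈ V, basisLaplacian b f x ≤ c x * f x) (hbd : ∀ x ∈ frontier V, 0 ≤ f x) :
    (∀ x ∈ closure V, 0 ≤ f x) ∧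
      (IsPreconnected V → (∃ x ∈ frontier V, 0 < f x) → ∀ x ∈ V, 0 < f x) := by
  have := b.finiteDimensional_of_finite
  have : ProperSpace E := FiniteDimensional.proper_real E
  have hnonneg : ∀ x ∈ closure V, 0 ≤ f x :=
    nonneg_of_basisLaplacian_nonpos hVo hVb.isCompact_closure hfc hf hf'
      (fun x hx hfx ↦ (hlap x hx).trans (mul_nonpos_of_nonneg_of_nonpos (hc0 x hx) hfx.le)) hbd
  refine ⟨hnonneg, fun hconn ⟨y, hy, hfy⟩ x hx ↦ ?_⟩
  have hf0 : ∀ x ∈ V, 0 ≤ f x := fun x hx ↦ hnonneg x (subset_closure hx)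
  have hlap' : ∀ x ∈ V, ∃ C, ∀ᶠ y in 𝓝 x, basisLaplacian b f y ≤ C * f y := by
    intro x hx
    obtain ⟨C, hC⟩ := hc x hx
    refine ⟨C, ?_⟩
    filter_upwards [hVo.eventually_mem hx, eventually_map.1 hC] with y hy hcy
    exact (hlap y hy).trans (mul_le_mul_of_nonneg_right hcy (hf0 y hy))
  refine (hf0 x hx).lt_of_ne' fun hfx ↦ hfy.ne' ?_
  have hzero : EqOn f 0 V := eqOn_zero_of_basisLaplacian_le hVo hconn hf hf' hf0 hlap' hx hfx
  exact hzero.of_subset_closure hfc continuousOn_const subset_closure subset_rfl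
    (frontier_subset_closure hy)

end MaximumPrinciple

/-- Maximum-principle positivity for solutions of `Δφ = 8φ/(1 − x² − y²)²` on bounded open
sets compactly contained in the unit disk. -/
theorem maximum_principle_kappa_neg_one
    (V : Set (ℝ × ℝ)) (hVo : IsOpen V) (hVb : Bornology.IsBounded V)
    (hVD : closure V ⊆ {p : ℝ × ℝ | p.1 ^ 2 + p.2 ^ 2 < 1})
    (φ : ℝ × ℝ → ℝ)
    (hc : ContinuousOn φ (closure V))
    (hd : ∀ p ∈ V, DifferentiableAt ℝ φ p ∧
      DifferentiableAt ℝ (pdx φ) p ∧ DifferentiableAt ℝ (pdy φ) p)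
    (hpde : ∀ p ∈ V, lap φ p = 8 * φ p / (1 - p.1 ^ 2 - p.2 ^ 2) ^ 2)
    (hbd : ∀ p ∈ frontier V, 0 ≤ φ p) :
    (∀ p ∈ closure V, 0 ≤ φ p) ∧
      (IsConnected V → (∃ p ∈ frontier V, 0 < φ p) → ∀ p ∈ V, 0 < φ p) := by
  have hden : ∀ p ∈ V, 0 < 1 - p.1 ^ 2 - p.2 ^ 2 := fun p hp ↦ by
    linarith [show p.1 ^ 2 + p.2 ^ 2 < 1 from hVD (subset_closure hp)]
  have hcoef : ∀ p ∈ V, ContinuousAt (fun p : ℝ × ℝ ↦ 8 / (1 - p.1 ^ 2 - p.2 ^ 2) ^ 2) p :=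
    fun p hp ↦ ContinuousAt.div (by fun_prop) (by fun_prop) (pow_pos (hden p hp) 2).ne'
  refine (maximum_principle_kappa_neg_one_general (b := Basis.finTwoProd ℝ)
    (c := fun p ↦ 8 / (1 - p.1 ^ 2 - p.2 ^ 2) ^ 2) hVo hVb hc
    (fun p hp ↦ (hd p hp).1.differentiableWithinAt) ?_ (fun p _ ↦ by positivity)
    (fun p hp ↦ (hcoef p hp).isBoundedUnder_le) ?_ hbd).imp_right
      fun hpos hconn ↦ hpos hconn.isPreconnected
  · simp only [Fin.forall_fin_two, Basis.finTwoProd_zero, Basis.finTwoProd_one]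
    exact ⟨fun p hp ↦ (hd p hp).2.1.differentiableWithinAt,
      fun p hp ↦ (hd p hp).2.2.differentiableWithinAt⟩
  · intro p hp
    rw [basisLaplacian_finTwoProd, hpde p hp, mul_div_right_comm]
end

section
/- Let V ⊆ ℝ² be a bounded open set whose closure is contained in 𝔻, and let φ be a real-valued function that is continuous on the closure of V, twice differentiable on V, and satisfies Δφ + 8·φ/(1 + x² + y²)² = 0 at every point of V. If φ ≤ 0 at every point of the topological frontier of V, then φ ≤ 0 on the closure of V; and if moreover V is connected and φ is strictly negative at some point of the frontier of V, then φ < 0 at every point of V. -/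
/-!
Let `h = (1 - ‖x‖²) / (1 + ‖x‖²)` be the height of the unit sphere in stereographic coordinates. In
the plane `Δh + 8h / (1 + ‖x‖²)² = 0`, so lowering `h` by a small constant gives a strict
supersolution `g`, still positive on the compact set `closure V` inside the unit disk. If `u` were
positive somewhere, `u / g` would have a positive interior maximum `M`, where `u - M g` is locally
maximal and so `Δu ≤ M Δg`; this contradicts the two differential inequalities. Hence `u ≤ 0`,
which makes `Δu = -8u / (1 + ‖x‖²)²` nonnegative, and the strong maximum principle for subharmonic
functions applies. Since the second derivatives of `u` need not be continuous, the latter is proved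
by comparison with Hopf's barrier on annuli rather than by mean values.
-/

open Set Filter Metric Topology Module Laplacian

section TwiceDifferentiable

variable {E F : Type*} [NormedAddCommGroup E] [NormedSpace ℝ E]
  [NormedAddCommGroup F] [NormedSpace ℝ F]

/-- Twice Fréchet differentiability at a point. Unlike `ContDiffAt ℝ 2`, it requires the second
derivative only at the point itself, with no continuity. -/
def TwiceDifferentiableAt (f : E → F) (x : E) : Prop :=
  (∀ᶠ y in 𝓝 x, DifferentiableAt ℝ f y) ∧ DifferentiableAt ℝ (fderiv ℝ f) x

namespace TwiceDifferentiableAt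

variable {f g : E → F} {x : E}

lemma continuousAt (hf : TwiceDifferentiableAt f x) : ContinuousAt f x :=
  hf.1.self_of_nhds.continuousAt

lemma fderiv_sub_eventuallyEq (hf : TwiceDifferentiableAt f x) (hg : TwiceDifferentiableAt g x) :
    fderiv ℝ (f - g) =ᶠ[𝓝 x] fderiv ℝ f - fderiv ℝ g := by
  filter_upwards [hf.1, hg.1] with y hfy hgy using fderiv_sub hfy hgy

lemma sub (hf : TwiceDifferentiableAt f x) (hg : TwiceDifferentiableAt g x) :
    TwiceDifferentiableAt (f - g) x :=
  ⟨hf.1.mp (hg.1.mono fun _ hgy hfy ↦ hfy.sub hgy),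
    (hf.2.sub hg.2).congr_of_eventuallyEq (hf.fderiv_sub_eventuallyEq hg)⟩

lemma const_smul (hf : TwiceDifferentiableAt f x) (c : ℝ) : TwiceDifferentiableAt (c • f) x := by
  refine ⟨hf.1.mono fun _ hfy ↦ hfy.const_smul c, ?_⟩
  rw [fderiv_const_smul_field]
  exact hf.2.const_smul c

lemma fderiv_fderiv_sub (hf : TwiceDifferentiableAt f x) (hg : TwiceDifferentiableAt g x) :
    fderiv ℝ (fderiv ℝ (f - g)) x = fderiv ℝ (fderiv ℝ f) x - fderiv ℝ (fderiv ℝ g) x := by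
  rw [(hf.fderiv_sub_eventuallyEq hg).fderiv_eq, fderiv_sub hf.2 hg.2]

lemma deriv_deriv_comp_line (hf : TwiceDifferentiableAt f x) (v : E) :
    deriv (deriv fun t : ℝ ↦ f (x + t • v)) 0 = fderiv ℝ (fderiv ℝ f) x v v := by
  have hline (t : ℝ) : HasDerivAt (fun t : ℝ ↦ x + t • v) v t := by
    simpa using ((hasDerivAt_id t).smul_const v).const_add x
  have hlim : Tendsto (fun t : ℝ ↦ x + t • v) (𝓝 0) (𝓝 x) := by
    simpa using (hline 0).continuousAt.tendsto
  have hderiv : deriv (fun t : ℝ ↦ f (x + t • v)) =ᶠ[𝓝 0] fun t ↦ fderiv ℝ f (x + t • v) v :=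
    (hlim.eventually hf.1).mono fun t ht ↦ (ht.hasFDerivAt.comp_hasDerivAt t (hline t)).deriv
  have hf' : HasDerivAt (fun t : ℝ ↦ fderiv ℝ f (x + t • v)) (fderiv ℝ (fderiv ℝ f) x v) 0 :=
    hf.2.hasFDerivAt.comp_hasDerivAt_of_eq 0 (hline 0) (by simp)
  rw [hderiv.deriv_eq]
  simpa using (hf'.clm_apply (hasDerivAt_const 0 v)).deriv

variable {G : Type*} [NormedAddCommGroup G] [NormedSpace ℝ G] {z : G}

lemma hasFDerivAt_fderiv_comp_continuousLinearEquiv (e : G ≃L[ℝ] E)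
    (hf : TwiceDifferentiableAt f (e z)) :
    HasFDerivAt (fderiv ℝ (f ∘ e))
      (((ContinuousLinearMap.compL ℝ G E F).flip (e : G →L[ℝ] E)).comp
        ((fderiv ℝ (fderiv ℝ f) (e z)).comp (e : G →L[ℝ] E))) z := by
  have hfderiv : fderiv ℝ (f ∘ e) =
      (ContinuousLinearMap.compL ℝ G E F).flip (e : G →L[ℝ] E) ∘ fderiv ℝ f ∘ e :=
    funext fun _ ↦ e.comp_right_fderiv
  rw [hfderiv]
  exact (ContinuousLinearMap.hasFDerivAt _).comp z (hf.2.hasFDerivAt.comp z e.hasFDerivAt)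

lemma comp_continuousLinearEquiv (e : G ≃L[ℝ] E) (hf : TwiceDifferentiableAt f (e z)) :
    TwiceDifferentiableAt (f ∘ e) z :=
  ⟨((e.continuous.tendsto z).eventually hf.1).mono fun _ hy ↦
      e.comp_right_differentiableAt_iff.2 hy,
    (hf.hasFDerivAt_fderiv_comp_continuousLinearEquiv e).differentiableAt⟩

lemma fderiv_fderiv_comp_continuousLinearEquiv_apply (e : G ≃L[ℝ] E)
    (hf : TwiceDifferentiableAt f (e z)) (v w : G) :
    fderiv ℝ (fderiv ℝ (f ∘ e)) z v w = fderiv ℝ (fderiv ℝ f) (e z) (e v) (e w) := by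
  simp [(hf.hasFDerivAt_fderiv_comp_continuousLinearEquiv e).fderiv]

end TwiceDifferentiableAt

theorem deriv_deriv_nonpos_of_isLocalMax {f : ℝ → ℝ} {t : ℝ} (hf : ContinuousAt f t)
    (hmax : IsLocalMax f t) : deriv (deriv f) t ≤ 0 := by
  by_contra! hpos
  have hmin : IsLocalMin f t := isLocalMin_of_deriv_deriv_pos hpos hmax.deriv_eq_zero hf
  have hconst : f =ᶠ[𝓝 t] fun _ ↦ f t := by
    filter_upwards [hmax, hmin] with x hle hge using le_antisymm hle hge
  have hzero : deriv (deriv f) t = 0 := by simp [hconst.deriv.deriv_eq]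
  exact hpos.ne' hzero

theorem fderiv_fderiv_apply_self_nonpos_of_isLocalMax {f : E → ℝ} {x : E}
    (hf : TwiceDifferentiableAt f x) (hmax : IsLocalMax f x) (v : E) :
    fderiv ℝ (fderiv ℝ f) x v v ≤ 0 := by
  have hcont : ContinuousAt (fun t : ℝ ↦ x + t • v) 0 := by fun_prop
  have hx : x + (0 : ℝ) • v = x := by simp
  rw [← hf.deriv_deriv_comp_line v]
  refine deriv_deriv_nonpos_of_isLocalMax ?_ ?_
  · exact ContinuousAt.comp (by simpa [hx] using hf.continuousAt) hcont
  · exact IsLocalMax.comp_continuous (g := fun t : ℝ ↦ x + t • v) (by rwa [hx]) hcont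

end TwiceDifferentiable

section Laplacian

variable {E : Type*} [NormedAddCommGroup E] [InnerProductSpace ℝ E] [FiniteDimensional ℝ E]
  {u v : E → ℝ} {x : E}

lemma laplacian_eq_sum_fderiv_fderiv {ι : Type*} [Fintype ι] (b : OrthonormalBasis ι ℝ E)
    (u : E → ℝ) (x : E) : Δ u x = ∑ i, fderiv ℝ (fderiv ℝ u) x (b i) (b i) := by
  simp [InnerProductSpace.laplacian_eq_iteratedFDeriv_orthonormalBasis u b,
    iteratedFDeriv_two_apply]

lemma TwiceDifferentiableAt.laplacian_sub (hu : TwiceDifferentiableAt u x)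
    (hv : TwiceDifferentiableAt v x) : Δ (u - v) x = Δ u x - Δ v x := by
  simp [laplacian_eq_sum_fderiv_fderiv (stdOrthonormalBasis ℝ E), hu.fderiv_fderiv_sub hv]

lemma laplacian_const_smul (c : ℝ) (u : E → ℝ) (x : E) : Δ (c • u) x = c * Δ u x := by
  have hfderiv : fderiv ℝ (c • u) = c • fderiv ℝ u := fderiv_const_smul_field c
  have hfderiv₂ : fderiv ℝ (c • fderiv ℝ u) = c • fderiv ℝ (fderiv ℝ u) :=
    fderiv_const_smul_field (R := ℝ) (f := fderiv ℝ u) c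
  simp only [laplacian_eq_sum_fderiv_fderiv (stdOrthonormalBasis ℝ E), hfderiv, hfderiv₂,
    Pi.smul_apply, smul_apply, smul_eq_mul, Finset.mul_sum]

theorem laplacian_nonpos_of_isLocalMax (hu : TwiceDifferentiableAt u x) (hmax : IsLocalMax u x) :
    Δ u x ≤ 0 := by
  rw [laplacian_eq_sum_fderiv_fderiv (stdOrthonormalBasis ℝ E)]
  exact Finset.sum_nonpos fun i _ ↦ fderiv_fderiv_apply_self_nonpos_of_isLocalMax hu hmax _

end Laplacian

section Radial

variable {E : Type*} [NormedAddCommGroup E] [InnerProductSpace ℝ E]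
  {F F' : ℝ → ℝ} {F'' : ℝ} {q x : E}

lemma hasFDerivAt_norm_sub_sq (q x : E) :
    HasFDerivAt (fun y ↦ ‖y - q‖ ^ 2) (2 • innerSL ℝ (x - q)) x :=
  ((hasFDerivAt_id x).sub_const q).norm_sq

lemma hasFDerivAt_radial {s : ℝ} (hF : HasDerivAt F s (‖x - q‖ ^ 2)) :
    HasFDerivAt (fun y ↦ F (‖y - q‖ ^ 2)) (s • 2 • innerSL ℝ (x - q)) x :=
  hF.comp_hasFDerivAt x (hasFDerivAt_norm_sub_sq q x)

lemma hasFDerivAt_fderiv_radial (hF : ∀ᶠ t in 𝓝 (‖x - q‖ ^ 2), HasDerivAt F (F' t) t)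
    (hF' : HasDerivAt F' F'' (‖x - q‖ ^ 2)) :
    HasFDerivAt (fderiv ℝ fun y ↦ F (‖y - q‖ ^ 2))
      (F' (‖x - q‖ ^ 2) • 2 • innerSL ℝ +
        (F'' • 2 • innerSL ℝ (x - q)).smulRight (2 • innerSL ℝ (x - q))) x := by
  have hfderiv : fderiv ℝ (fun y ↦ F (‖y - q‖ ^ 2)) =ᶠ[𝓝 x]
      fun y ↦ F' (‖y - q‖ ^ 2) • 2 • innerSL ℝ (y - q) :=
    ((hasFDerivAt_norm_sub_sq q x).continuousAt.eventually hF).mono fun y hy ↦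
      (hasFDerivAt_radial hy).fderiv
  have hinner : HasFDerivAt (fun y : E ↦ 2 • innerSL ℝ (y - q)) (2 • innerSL ℝ) x :=
    ((innerSL ℝ).hasFDerivAt.comp x ((hasFDerivAt_id x).sub_const q)).const_smul 2
  exact ((hasFDerivAt_radial hF').smul hinner).congr_of_eventuallyEq hfderiv

lemma twiceDifferentiableAt_radial (hF : ∀ᶠ t in 𝓝 (‖x - q‖ ^ 2), HasDerivAt F (F' t) t)
    (hF' : HasDerivAt F' F'' (‖x - q‖ ^ 2)) :
    TwiceDifferentiableAt (fun y ↦ F (‖y - q‖ ^ 2)) x :=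
  ⟨((hasFDerivAt_norm_sub_sq q x).continuousAt.eventually hF).mono fun _ hy ↦
    (hasFDerivAt_radial hy).differentiableAt, (hasFDerivAt_fderiv_radial hF hF').differentiableAt⟩

theorem laplacian_radial [FiniteDimensional ℝ E]
    (hF : ∀ᶠ t in 𝓝 (‖x - q‖ ^ 2), HasDerivAt F (F' t) t)
    (hF' : HasDerivAt F' F'' (‖x - q‖ ^ 2)) :
    Δ (fun y ↦ F (‖y - q‖ ^ 2)) x =
      4 * F'' * ‖x - q‖ ^ 2 + 2 * finrank ℝ E * F' (‖x - q‖ ^ 2) := by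
  let b := stdOrthonormalBasis ℝ E
  have hterm (i) : fderiv ℝ (fderiv ℝ fun y ↦ F (‖y - q‖ ^ 2)) x (b i) (b i) =
      4 * F'' * inner ℝ (x - q) (b i) ^ 2 + 2 * F' (‖x - q‖ ^ 2) := by
    rw [(hasFDerivAt_fderiv_radial hF hF').fderiv]
    have hunit : innerSL ℝ (b i) (b i) = (1 : ℝ) := by simp [innerSL_apply_apply]
    simp only [add_apply, smul_apply, ContinuousLinearMap.smulRight_apply, innerSL_apply_apply,
      nsmul_eq_mul, Nat.cast_ofNat, smul_eq_mul, hunit, mul_one]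
    ring
  have hsum : ∑ i, inner ℝ (x - q) (b i) ^ 2 = ‖x - q‖ ^ 2 := b.sum_sq_inner_left (x - q)
  simp only [laplacian_eq_sum_fderiv_fderiv b, hterm, Finset.sum_add_distrib, ← Finset.mul_sum,
    hsum, Finset.sum_const, Finset.card_univ, Fintype.card_fin, nsmul_eq_mul]
  ring

end Radial

section MaximumPrinciple

variable {E : Type*} [NormedAddCommGroup E] [InnerProductSpace ℝ E] [FiniteDimensional ℝ E]
  {V : Set E} {u g : E → ℝ}

theorem nonpos_of_mul_laplacian_lt (hV : IsOpen V) (hVc : IsCompact (closure V))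
    (hu : ContinuousOn u (closure V)) (hg : ContinuousOn g (closure V))
    (hu₂ : ∀ x ∈ V, TwiceDifferentiableAt u x) (hg₂ : ∀ x ∈ V, TwiceDifferentiableAt g x)
    (hgpos : ∀ x ∈ closure V, 0 < g x) (hlap : ∀ x ∈ V, 0 < u x → u x * Δ g x < g x * Δ u x)
    (hbd : ∀ x ∈ frontier V, u x ≤ 0) : ∀ x ∈ closure V, u x ≤ 0 := by
  intro y hy
  by_contra! hpos
  -- At an interior maximum of `u / g` with value `M`, the function `u - M g` is maximal.
  obtain ⟨p, hp, hmax⟩ := hVc.exists_isMaxOn ⟨y, hy⟩ (hu.div hg fun x hx ↦ (hgpos x hx).ne')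
  set M := u p / g p with hM
  have hMg : u p = M * g p := by rw [hM, div_mul_cancel₀ _ (hgpos p hp).ne']
  have hup : 0 < u p := by
    have hMpos : 0 < M := (div_pos hpos (hgpos y hy)).trans_le (hmax hy)
    exact hMg ▸ mul_pos hMpos (hgpos p hp)
  have hle (x) (hx : x ∈ closure V) : u x ≤ M * g x := (div_le_iff₀ (hgpos x hx)).1 (hmax hx)
  have hpV : p ∈ V := by
    by_contra hpV
    exact (hbd p (hV.frontier_eq ▸ ⟨hp, hpV⟩)).not_gt hup
  have hlocal : IsLocalMax (u - M • g) p := by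
    filter_upwards [hV.mem_nhds hpV] with x hx
    simpa [hMg] using hle x (subset_closure hx)
  have hlap_le : Δ u p ≤ M * Δ g p := by
    have hMg₂ := (hg₂ p hpV).const_smul M
    have hnonpos := laplacian_nonpos_of_isLocalMax ((hu₂ p hpV).sub hMg₂) hlocal
    rwa [(hu₂ p hpV).laplacian_sub hMg₂, laplacian_const_smul, sub_nonpos] at hnonpos
  refine (hlap p hpV hup).not_ge ?_
  calc g p * Δ u p ≤ g p * (M * Δ g p) := mul_le_mul_of_nonneg_left hlap_le (hgpos p hp).le
    _ = u p * Δ g p := by rw [hMg]; ring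

theorem nonpos_of_laplacian_pos (hV : IsOpen V) (hVc : IsCompact (closure V))
    (hu : ContinuousOn u (closure V)) (hu₂ : ∀ x ∈ V, TwiceDifferentiableAt u x)
    (hlap : ∀ x ∈ V, 0 < Δ u x) (hbd : ∀ x ∈ frontier V, u x ≤ 0) : ∀ x ∈ closure V, u x ≤ 0 := by
  refine nonpos_of_mul_laplacian_lt (g := fun _ ↦ 1) hV hVc hu continuousOn_const hu₂
    (fun x _ ↦ ⟨by simp, by simp⟩) (fun _ _ ↦ one_pos) (fun x hx _ ↦ ?_) hbd
  simpa using hlap x hx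

theorem nonpos_of_strict_supersolution {c : E → ℝ} (hV : IsOpen V) (hVc : IsCompact (closure V))
    (hu : ContinuousOn u (closure V)) (hg : ContinuousOn g (closure V))
    (hu₂ : ∀ x ∈ V, TwiceDifferentiableAt u x) (hg₂ : ∀ x ∈ V, TwiceDifferentiableAt g x)
    (hgpos : ∀ x ∈ closure V, 0 < g x) (hsub : ∀ x ∈ V, 0 ≤ Δ u x + c x * u x)
    (hsuper : ∀ x ∈ V, Δ g x + c x * g x < 0) (hbd : ∀ x ∈ frontier V, u x ≤ 0) :
    ∀ x ∈ closure V, u x ≤ 0 := by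
  refine nonpos_of_mul_laplacian_lt hV hVc hu hg hu₂ hg₂ hgpos (fun x hx hux ↦ ?_) hbd
  have hgx := hgpos x (subset_closure hx)
  calc u x * Δ g x < u x * -(c x * g x) :=
        mul_lt_mul_of_pos_left (by linarith [hsuper x hx]) hux
    _ = g x * -(c x * u x) := by ring
    _ ≤ g x * Δ u x := mul_le_mul_of_nonneg_left (by linarith [hsub x hx]) hgx.le

end MaximumPrinciple

section Hopf

variable {E : Type*} [NormedAddCommGroup E] [InnerProductSpace ℝ E]

/-- The barrier of Hopf's lemma: a function of `‖x - q‖`, increasing for `0 < η`, `0 < α`, and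
strictly superharmonic away from `q` once `α` is large. -/
noncomputable def gaussianBarrier (C η α : ℝ) (q x : E) : ℝ :=
  C - η * Real.exp (-(α * ‖x - q‖ ^ 2))

lemma hasDerivAt_sub_mul_exp_neg_mul (C η α t : ℝ) :
    HasDerivAt (fun t ↦ C - η * Real.exp (-(α * t))) (η * α * Real.exp (-(α * t))) t := by
  refine ((((hasDerivAt_id t).const_mul α).neg.exp.const_mul η).const_sub C).congr_deriv ?_
  simp only [id_eq, Pi.neg_apply, mul_one, mul_neg, neg_neg]
  ring

lemma hasDerivAt_mul_exp_neg_mul (η α t : ℝ) :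
    HasDerivAt (fun t ↦ η * α * Real.exp (-(α * t))) (-(η * α ^ 2 * Real.exp (-(α * t)))) t := by
  refine (((hasDerivAt_id t).const_mul α).neg.exp.const_mul (η * α)).congr_deriv ?_
  simp only [id_eq, Pi.neg_apply, mul_one, mul_neg, neg_inj]
  ring

lemma twiceDifferentiableAt_gaussianBarrier (C η α : ℝ) (q x : E) :
    TwiceDifferentiableAt (gaussianBarrier C η α q) x :=
  twiceDifferentiableAt_radial (F := fun t ↦ C - η * Real.exp (-(α * t)))
    (.of_forall (hasDerivAt_sub_mul_exp_neg_mul C η α)) (hasDerivAt_mul_exp_neg_mul η α _)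

variable [FiniteDimensional ℝ E] {V : Set E} {u : E → ℝ}

lemma laplacian_gaussianBarrier (C η α : ℝ) (q x : E) :
    Δ (gaussianBarrier C η α q) x =
      2 * η * α * Real.exp (-(α * ‖x - q‖ ^ 2)) * (finrank ℝ E - 2 * α * ‖x - q‖ ^ 2) := by
  unfold gaussianBarrier
  rw [laplacian_radial (F := fun t ↦ C - η * Real.exp (-(α * t)))
    (.of_forall (hasDerivAt_sub_mul_exp_neg_mul C η α)) (hasDerivAt_mul_exp_neg_mul η α _)]
  ring

lemma exists_laplacian_gaussianBarrier_neg {η σ : ℝ} (hη : 0 < η) (hσ : 0 < σ) (q : E) :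
    ∃ α > 0, ∀ C x, σ < ‖x - q‖ → Δ (gaussianBarrier C η α q) x < 0 := by
  obtain ⟨α, hα, hασ⟩ : ∃ α > 0, finrank ℝ E < 2 * α * σ ^ 2 :=
    ⟨(finrank ℝ E + 1) / σ ^ 2, by positivity, by field_simp; linarith⟩
  refine ⟨α, hα, fun C x hσx ↦ ?_⟩
  rw [laplacian_gaussianBarrier]
  refine mul_neg_of_pos_of_neg (by positivity) (sub_neg.2 (hασ.trans ?_))
  gcongr

lemma frontier_ball_sdiff_closedBall_subset {X : Type*} [PseudoMetricSpace X] (q : X) (r σ : ℝ) :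
    frontier (ball q r \ closedBall q σ) ⊆ sphere q r ∪ sphere q σ := by
  rw [sdiff_eq]
  refine (frontier_inter_subset _ _).trans (union_subset_union ?_ ?_)
  · exact inter_subset_left.trans frontier_ball_subset_sphere
  · rw [frontier_compl]
    exact inter_subset_right.trans frontier_closedBall_subset_sphere

theorem lt_of_mem_annulus_of_laplacian_nonneg {q : E} {r σ M η : ℝ} (hσ : 0 < σ) (hη : 0 < η)
    (hu : ContinuousOn u (closure (ball q r \ closedBall q σ)))
    (hu₂ : ∀ x ∈ ball q r \ closedBall q σ, TwiceDifferentiableAt u x)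
    (hlap : ∀ x ∈ ball q r \ closedBall q σ, 0 ≤ Δ u x)
    (hM : ∀ x ∈ sphere q r, u x ≤ M) (hσM : ∀ x ∈ sphere q σ, u x ≤ M - η) :
    ∀ x ∈ ball q r \ closedBall q σ, u x < M := by
  obtain ⟨α, hα, hneg⟩ := exists_laplacian_gaussianBarrier_neg hη hσ q
  -- This constant makes the barrier equal to `M` on the outer sphere.
  let w := gaussianBarrier (M + η * Real.exp (-(α * r ^ 2))) η α q
  have hw₂ (x) : TwiceDifferentiableAt w x := twiceDifferentiableAt_gaussianBarrier _ _ _ _ _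
  have hcompact : IsCompact (closure (ball q r \ closedBall q σ)) :=
    (isBounded_ball.subset sdiff_subset).isCompact_closure
  have hfrontier (x) (hx : x ∈ frontier (ball q r \ closedBall q σ)) : u x ≤ w x := by
    rcases frontier_ball_sdiff_closedBall_subset q r σ hx with hxr | hxσ
    · simpa [w, gaussianBarrier, mem_sphere_iff_norm.1 hxr] using hM x hxr
    · have hexp_le : η * Real.exp (-(α * ‖x - q‖ ^ 2)) ≤ η :=
        mul_le_of_le_one_right hη.le (Real.exp_le_one_iff.2 (neg_nonpos.2 (by positivity)))
      have hexp_pos : 0 < η * Real.exp (-(α * r ^ 2)) := by positivity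
      simp only [w, gaussianBarrier]
      linarith [hσM x hxσ]
  have hle : ∀ x ∈ closure (ball q r \ closedBall q σ), (u - w) x ≤ 0 := by
    refine nonpos_of_laplacian_pos (isOpen_ball.sdiff isClosed_closedBall) hcompact
      (hu.sub fun x _ ↦ (hw₂ x).continuousAt.continuousWithinAt)
      (fun x hx ↦ (hu₂ x hx).sub (hw₂ x)) (fun x hx ↦ ?_) fun x hx ↦ sub_nonpos.2 (hfrontier x hx)
    have hσx : σ < ‖x - q‖ := by simpa [dist_eq_norm] using hx.2
    rw [(hu₂ x hx).laplacian_sub (hw₂ x)]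
    linarith [hlap x hx, hneg (M + η * Real.exp (-(α * r ^ 2))) x hσx]
  intro x hx
  have hxr : ‖x - q‖ < r := mem_ball_iff_norm.1 hx.1
  have hexp_lt : η * Real.exp (-(α * r ^ 2)) < η * Real.exp (-(α * ‖x - q‖ ^ 2)) := by gcongr
  calc u x ≤ w x := sub_nonpos.1 (hle x (subset_closure hx))
    _ < M := by simp only [w, gaussianBarrier]; linarith

lemma exists_forall_closedBall_le_sub {X : Type*} [PseudoMetricSpace X] {f : X → ℝ} {q : X}
    {M : ℝ} (hf : ContinuousAt f q) (hq : f q < M) :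
    ∃ σ > 0, ∃ η > 0, ∀ x ∈ closedBall q σ, f x ≤ M - η := by
  obtain ⟨m, hqm, hmM⟩ := exists_between hq
  obtain ⟨σ, hσ, hball⟩ := nhds_basis_closedBall.eventually_iff.1 (hf.eventually_lt_const hqm)
  exact ⟨σ, hσ, M - m, sub_pos.2 hmM, fun x hx ↦ by linarith [hball hx]⟩

theorem lt_of_mem_ball_of_laplacian_nonneg {q : E} {r M : ℝ}
    (hu : ContinuousOn u (closedBall q r)) (hu₂ : ∀ x ∈ ball q r, TwiceDifferentiableAt u x)
    (hlap : ∀ x ∈ ball q r, 0 ≤ Δ u x) (hM : ∀ x ∈ sphere q r, u x ≤ M) (hq : u q < M) :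
    ∀ x ∈ ball q r, u x < M := by
  intro x hx
  obtain ⟨σ, hσ, η, hη, hσM⟩ :=
    exists_forall_closedBall_le_sub (hu₂ q (mem_ball_self (pos_of_mem_ball hx))).continuousAt hq
  by_cases hxσ : x ∈ closedBall q σ
  · linarith [hσM x hxσ]
  · have hclosure : closure (ball q r \ closedBall q σ) ⊆ closedBall q r :=
      (closure_mono sdiff_subset).trans closure_ball_subset_closedBall
    exact lt_of_mem_annulus_of_laplacian_nonneg hσ hη (hu.mono hclosure)
      (fun y hy ↦ hu₂ y hy.1) (fun y hy ↦ hlap y hy.1) hM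
      (fun y hy ↦ hσM y (sphere_subset_closedBall hy)) x ⟨hx, hxσ⟩

theorem forall_lt_of_exists_lt_of_laplacian_nonneg {M : ℝ} (hV : IsOpen V) (hVc : IsPreconnected V)
    (hu₂ : ∀ x ∈ V, TwiceDifferentiableAt u x) (hlap : ∀ x ∈ V, 0 ≤ Δ u x)
    (hM : ∀ x ∈ V, u x ≤ M) (hlt : ∃ x ∈ V, u x < M) : ∀ x ∈ V, u x < M := by
  have hu : ContinuousOn u V := fun x hx ↦ (hu₂ x hx).continuousAt.continuousWithinAt
  have hopen : IsOpen (V ∩ u ⁻¹' Iio M) := hu.isOpen_inter_preimage hV isOpen_Iio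
  suffices hsub : V ⊆ V ∩ u ⁻¹' Iio M from fun x hx ↦ (hsub hx).2
  refine hVc.subset_of_closure_inter_subset hopen ?_ ?_
  · obtain ⟨x, hx, hxM⟩ := hlt
    exact ⟨x, hx, hx, hxM⟩
  · rintro z ⟨hzcl, hzV⟩
    obtain ⟨R, hR, hRV⟩ := Metric.isOpen_iff.1 hV z hzV
    obtain ⟨q, ⟨_, hqM⟩, hzq⟩ := Metric.mem_closure_iff.1 hzcl (R / 2) (half_pos hR)
    have hball : closedBall q (R / 2) ⊆ V :=
      (closedBall_subset_ball' (by rw [dist_comm]; linarith)).trans hRV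
    have hball' := ball_subset_closedBall.trans hball
    exact ⟨hzV, lt_of_mem_ball_of_laplacian_nonneg (hu.mono hball) (fun x hx ↦ hu₂ x (hball' hx))
      (fun x hx ↦ hlap x (hball' hx)) (fun x hx ↦ hM x (hball (sphere_subset_closedBall hx))) hqM
      z hzq⟩

end Hopf

section KappaOne

variable {E : Type*} [NormedAddCommGroup E]

/-- A vertical translate of the height function of the unit sphere in stereographic coordinates
(the height itself is `k = 1`). It serves as a positive strict supersolution of
`Δu + 8u / (1 + ‖x‖²)² = 0`. -/
noncomputable def stereographicHeight (k : ℝ) (x : E) : ℝ := 2 / (1 + ‖x‖ ^ 2) - k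

lemma continuous_stereographicHeight (k : ℝ) : Continuous (stereographicHeight k : E → ℝ) := by
  have hne (x : E) : 1 + ‖x‖ ^ 2 ≠ 0 := by positivity
  unfold stereographicHeight
  fun_prop (disch := exact hne _)

lemma hasDerivAt_two_div_one_add_sub (k : ℝ) {t : ℝ} (ht : 1 + t ≠ 0) :
    HasDerivAt (fun t ↦ 2 / (1 + t) - k) (-2 / (1 + t) ^ 2) t := by
  refine (((hasDerivAt_const t 2).div ((hasDerivAt_id t).const_add 1) ht).sub_const k).congr_deriv
    ?_
  simp

lemma hasDerivAt_neg_two_div_one_add_sq {t : ℝ} (ht : 1 + t ≠ 0) :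
    HasDerivAt (fun t ↦ -2 / (1 + t) ^ 2) (4 / (1 + t) ^ 3) t := by
  refine ((hasDerivAt_const t (-2)).div (((hasDerivAt_id t).const_add 1).pow 2)
    (pow_ne_zero 2 ht)).congr_deriv ?_
  simp only [id_eq, Pi.pow_apply, zero_mul, Nat.cast_ofNat, Nat.add_one_sub_one, pow_one, mul_one,
    neg_mul, sub_neg_eq_add, zero_add]
  field_simp
  ring

lemma eventually_hasDerivAt_two_div_one_add_sub (k : ℝ) {s : ℝ} (hs : 1 + s ≠ 0) :
    ∀ᶠ t in 𝓝 s, HasDerivAt (fun t ↦ 2 / (1 + t) - k) (-2 / (1 + t) ^ 2) t := by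
  have hcont : ContinuousAt (fun t : ℝ ↦ 1 + t) s := by fun_prop
  exact (hcont.eventually_ne hs).mono fun t ↦ hasDerivAt_two_div_one_add_sub k

variable [InnerProductSpace ℝ E]

lemma twiceDifferentiableAt_stereographicHeight (k : ℝ) (x : E) :
    TwiceDifferentiableAt (stereographicHeight k) x := by
  have hs : 1 + ‖x - 0‖ ^ 2 ≠ 0 := by positivity
  unfold stereographicHeight
  simpa only [sub_zero] using twiceDifferentiableAt_radial (F := fun t ↦ 2 / (1 + t) - k)
    (eventually_hasDerivAt_two_div_one_add_sub k hs) (hasDerivAt_neg_two_div_one_add_sq hs)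

variable [FiniteDimensional ℝ E]

lemma laplacian_stereographicHeight_add (k : ℝ) (x : E) :
    Δ (stereographicHeight k : E → ℝ) x + 8 / (1 + ‖x‖ ^ 2) ^ 2 * stereographicHeight k x =
      4 * (4 - finrank ℝ E - 2 * k) / (1 + ‖x‖ ^ 2) ^ 2 := by
  have hs : 1 + ‖x - 0‖ ^ 2 ≠ 0 := by positivity
  have hlap := laplacian_radial (F := fun t ↦ 2 / (1 + t) - k)
    (eventually_hasDerivAt_two_div_one_add_sub k hs) (hasDerivAt_neg_two_div_one_add_sq hs)
  simp only [sub_zero] at hlap hs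
  unfold stereographicHeight
  rw [hlap]
  field_simp
  ring

variable {V : Set E} {u : E → ℝ}

theorem nonpos_of_laplacian_add_nonneg (hV : IsOpen V) (hVb : Bornology.IsBounded V)
    (hVn : ∀ x ∈ closure V, (4 - finrank ℝ E) * (1 + ‖x‖ ^ 2) < 4)
    (hu : ContinuousOn u (closure V)) (hu₂ : ∀ x ∈ V, TwiceDifferentiableAt u x)
    (hpde : ∀ x ∈ V, 0 ≤ Δ u x + 8 * u x / (1 + ‖x‖ ^ 2) ^ 2)
    (hbd : ∀ x ∈ frontier V, u x ≤ 0) : ∀ x ∈ closure V, u x ≤ 0 := by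
  have hVc : IsCompact (closure V) := hVb.isCompact_closure
  obtain ⟨m, hnm, hm⟩ := hVc.exists_forall_le' (f := (stereographicHeight 0 : E → ℝ))
    (a := (4 - finrank ℝ E) / 2) (continuous_stereographicHeight 0).continuousOn fun x hx ↦ by
      rw [stereographicHeight, sub_zero, div_lt_div_iff₀ two_pos (by positivity)]
      linarith [hVn x hx]
  -- `k > (4 - n) / 2` makes the height a strict supersolution, `k < m` keeps it positive.
  obtain ⟨k, hnk, hkm⟩ := exists_between hnm
  refine nonpos_of_strict_supersolution (g := stereographicHeight k)
    (c := fun x ↦ 8 / (1 + ‖x‖ ^ 2) ^ 2) hV hVc hu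
    (continuous_stereographicHeight k).continuousOn hu₂
    (fun x _ ↦ twiceDifferentiableAt_stereographicHeight k x) (fun x hx ↦ ?_) (fun x hx ↦ ?_)
    (fun x _ ↦ ?_) hbd
  · have hmx := hm x hx
    rw [stereographicHeight] at hmx ⊢
    linarith
  · simpa only [div_mul_eq_mul_div] using hpde x hx
  · rw [laplacian_stereographicHeight_add]
    exact div_neg_of_neg_of_pos (by linarith) (by positivity)

theorem nonpos_and_neg_of_laplacian_add_nonneg (hV : IsOpen V) (hVb : Bornology.IsBounded V)
    (hVn : ∀ x ∈ closure V, (4 - finrank ℝ E) * (1 + ‖x‖ ^ 2) < 4)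
    (hu : ContinuousOn u (closure V)) (hu₂ : ∀ x ∈ V, TwiceDifferentiableAt u x)
    (hpde : ∀ x ∈ V, 0 ≤ Δ u x + 8 * u x / (1 + ‖x‖ ^ 2) ^ 2)
    (hbd : ∀ x ∈ frontier V, u x ≤ 0) :
    (∀ x ∈ closure V, u x ≤ 0) ∧
      (IsPreconnected V → (∃ x ∈ frontier V, u x < 0) → ∀ x ∈ V, u x < 0) := by
  have hnonpos := nonpos_of_laplacian_add_nonneg hV hVb hVn hu hu₂ hpde hbd
  refine ⟨hnonpos, fun hVc ⟨b, hb, hub⟩ ↦ ?_⟩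
  have hlap (x) (hx : x ∈ V) : 0 ≤ Δ u x := by
    have hpotential : 8 * u x / (1 + ‖x‖ ^ 2) ^ 2 ≤ 0 :=
      div_nonpos_of_nonpos_of_nonneg (by linarith [hnonpos x (subset_closure hx)]) (by positivity)
    linarith [hpde x hx]
  have hneg : ∃ x ∈ V, u x < 0 := by
    have hbV : (𝓝[V] b).NeBot := mem_closure_iff_nhdsWithin_neBot.1 (frontier_subset_closure hb)
    have hnear : ∀ᶠ x in 𝓝[V] b, u x < 0 :=
      ((hu b (frontier_subset_closure hb)).mono subset_closure).eventually_lt_const hub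
    exact (eventually_mem_nhdsWithin.and hnear).exists
  exact forall_lt_of_exists_lt_of_laplacian_nonneg hV hVc hu₂ hlap
    (fun x hx ↦ hnonpos x (subset_closure hx)) hneg

end KappaOne

section ComplexPlane

variable {f : ℝ × ℝ → ℝ} {p : ℝ × ℝ}

lemma fderiv_eq_pdx_smul_fst_add_pdy_smul_snd (f : ℝ × ℝ → ℝ) (p : ℝ × ℝ) :
    fderiv ℝ f p =
      pdx f p • ContinuousLinearMap.fst ℝ ℝ ℝ + pdy f p • ContinuousLinearMap.snd ℝ ℝ ℝ := by
  ext <;> simp [pdx, pdy]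

lemma twiceDifferentiableAt_of_differentiableAt_pdx_pdy
    (hf : ∀ᶠ y in 𝓝 p, DifferentiableAt ℝ f y) (hx : DifferentiableAt ℝ (pdx f) p)
    (hy : DifferentiableAt ℝ (pdy f) p) : TwiceDifferentiableAt f p := by
  refine ⟨hf, ?_⟩
  rw [funext (fderiv_eq_pdx_smul_fst_add_pdy_smul_snd f)]
  exact (hx.smul_const _).add (hy.smul_const _)

lemma TwiceDifferentiableAt.lap_eq (hf : TwiceDifferentiableAt f p) :
    lap f p = fderiv ℝ (fderiv ℝ f) p (1, 0) (1, 0) + fderiv ℝ (fderiv ℝ f) p (0, 1) (0, 1) := by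
  have happly (v : ℝ × ℝ) :
      fderiv ℝ (fun y ↦ fderiv ℝ f y v) p v = fderiv ℝ (fderiv ℝ f) p v v := by
    rw [fderiv_clm_apply hf.2 (differentiableAt_const v)]
    simp
  exact congr_arg₂ (· + ·) (happly (1, 0)) (happly (0, 1))

lemma sq_norm_eq_equivRealProdCLM (z : ℂ) :
    ‖z‖ ^ 2 = (Complex.equivRealProdCLM z).1 ^ 2 + (Complex.equivRealProdCLM z).2 ^ 2 := by
  simp only [Complex.equivRealProdCLM_apply, Complex.sq_norm, Complex.normSq_apply, ← sq]

lemma laplacian_comp_equivRealProdCLM {z : ℂ}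
    (hf : TwiceDifferentiableAt f (Complex.equivRealProdCLM z)) :
    Δ (f ∘ Complex.equivRealProdCLM) z = lap f (Complex.equivRealProdCLM z) := by
  rw [hf.lap_eq, laplacian_eq_sum_fderiv_fderiv Complex.orthonormalBasisOneI]
  simp [hf.fderiv_fderiv_comp_continuousLinearEquiv_apply]

theorem maximum_principle_kappa_one_general {V : Set (ℝ × ℝ)} (hV : IsOpen V)
    (hVD : closure V ⊆ {p : ℝ × ℝ | p.1 ^ 2 + p.2 ^ 2 < 1}) (hf : ContinuousOn f (closure V))
    (hd : ∀ p ∈ V, DifferentiableAt ℝ f p ∧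
      DifferentiableAt ℝ (pdx f) p ∧ DifferentiableAt ℝ (pdy f) p)
    (hpde : ∀ p ∈ V, 0 ≤ lap f p + 8 * f p / (1 + p.1 ^ 2 + p.2 ^ 2) ^ 2)
    (hbd : ∀ p ∈ frontier V, f p ≤ 0) :
    (∀ p ∈ closure V, f p ≤ 0) ∧
      (IsPreconnected V → (∃ p ∈ frontier V, f p < 0) → ∀ p ∈ V, f p < 0) := by
  let e := Complex.equivRealProdCLM
  have hf₂ (p) (hp : p ∈ V) : TwiceDifferentiableAt f p :=
    twiceDifferentiableAt_of_differentiableAt_pdx_pdy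
      ((hV.eventually_mem hp).mono fun y hy ↦ (hd y hy).1) (hd p hp).2.1 (hd p hp).2.2
  have hclosure : closure (e ⁻¹' V) = e ⁻¹' closure V := (e.preimage_closure V).symm
  have hfrontier : frontier (e ⁻¹' V) = e ⁻¹' frontier V :=
    (e.toHomeomorph.preimage_frontier V).symm
  have hdisk (z) (hz : z ∈ closure (e ⁻¹' V)) : ‖z‖ ^ 2 < 1 :=
    (sq_norm_eq_equivRealProdCLM z).trans_lt (hVD (hclosure.subset hz))
  have hbounded : Bornology.IsBounded (e ⁻¹' V) := isBounded_ball.subset fun z hz ↦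
    mem_ball_zero_iff.2 ((sq_lt_one_iff₀ (norm_nonneg z)).1 (hdisk z (subset_closure hz)))
  have hdim (z) (hz : z ∈ closure (e ⁻¹' V)) : (4 - finrank ℝ ℂ : ℝ) * (1 + ‖z‖ ^ 2) < 4 := by
    rw [Complex.finrank_real_complex, Nat.cast_ofNat]
    linarith [hdisk z hz]
  have hpde' (z) (hz : e z ∈ V) : 0 ≤ Δ (f ∘ e) z + 8 * (f ∘ e) z / (1 + ‖z‖ ^ 2) ^ 2 := by
    rw [laplacian_comp_equivRealProdCLM (hf₂ (e z) hz), sq_norm_eq_equivRealProdCLM, ← add_assoc]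
    exact hpde (e z) hz
  have hmax := nonpos_and_neg_of_laplacian_add_nonneg (hV.preimage e.continuous) hbounded hdim
    (hclosure ▸ hf.comp e.continuous.continuousOn (mapsTo_preimage e _))
    (fun z hz ↦ (hf₂ (e z) hz).comp_continuousLinearEquiv e) hpde'
    (fun z hz ↦ hbd (e z) (hfrontier.subset hz))
  rw [hclosure, hfrontier] at hmax
  exact ⟨e.surjective.forall.2 hmax.1, fun hconn hneg ↦ e.surjective.forall.2 (hmax.2
    (e.toHomeomorph.isPreconnected_preimage.2 hconn) (e.surjective.exists.1 hneg))⟩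

end ComplexPlane

/-- Maximum-principle negativity for solutions of `Δφ + 8φ/(1 + x² + y²)² = 0` on
bounded open sets compactly contained in the unit disk. -/
theorem maximum_principle_kappa_one
    (V : Set (ℝ × ℝ)) (hVo : IsOpen V) (hVb : Bornology.IsBounded V)
    (hVD : closure V ⊆ {p : ℝ × ℝ | p.1 ^ 2 + p.2 ^ 2 < 1})
    (φ : ℝ × ℝ → ℝ)
    (hc : ContinuousOn φ (closure V))
    (hd : ∀ p ∈ V, DifferentiableAt ℝ φ p ∧
      DifferentiableAt ℝ (pdx φ) p ∧ DifferentiableAt ℝ (pdy φ) p)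
    (hpde : ∀ p ∈ V, lap φ p + 8 * φ p / (1 + p.1 ^ 2 + p.2 ^ 2) ^ 2 = 0)
    (hbd : ∀ p ∈ frontier V, φ p ≤ 0) :
    (∀ p ∈ closure V, φ p ≤ 0) ∧
      (IsConnected V → (∃ p ∈ frontier V, φ p < 0) → ∀ p ∈ V, φ p < 0) :=
  (maximum_principle_kappa_one_general hVo hVD hc hd (fun p hp ↦ (hpde p hp).ge) hbd).imp_right
    fun hneg hconn ↦ hneg hconn.isPreconnected
end
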